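/- ∫₀¹ K'(k)³ dk = 5 ∫₀¹ k K'(k)³ dk = Γ(1/4)⁸/(128π²). -/

import Mathlib

open scoped Real
open MeasureTheory

noncomputable def EllK (k : ℝ) : ℝ :=
  ∫ x in (0:ℝ)..(1:ℝ), 1 / Real.sqrt ((1 - x^2) * (1 - k^2 * x^2))

noncomputable def EllE (k : ℝ) : ℝ :=
  ∫ x in (0:ℝ)..(1:ℝ), Real.sqrt ((1 - k^2 * x^2) / (1 - x^2))

noncomputable def EllK' (k : ℝ) : ℝ := EllK (Real.sqrt (1 - k^2))

/-!
The involutions `k ↦ √(1 - k²)` and, by Landen's transformation, `k ↦ (1 - k) / (1 + k)` of the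
modulus turn `∫ k K³` into `∫ k K'³` and into `∫ (1 - k) / 4 K'³`, so `∫ K'³ = 5 ∫ k K'³`. By
Jacobi, `k = θ₄² / θ₃²` inverts the period ratio `t = K / K'`, and `K' = (π / 2) θ₃²`. In the
variable `t` the integral `∫ k K³` becomes the Mellin transform at `4` of `θ θ'' - 3 θ'²` for
`θ = ∑ exp (-π n² t)`, and integrating this double series termwise gives `3 / 2` times the
Eisenstein series `G₄` of `ℤ[i]`. Finally, `℘` of `ℤ[i]` has real period `1` and satisfies
`℘'² = 4 ℘³ - 60 G₄ ℘`, so its half-period `1 / 2` is both known and an elliptic integral, namely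
a beta integral times a multiple of `G₄ ^ (-1 / 4)`. This evaluates `G₄` as `Γ(1/4)⁸ / (960 π²)`.
-/

section

open Set Filter Topology Real ComplexConjugate

/-! ### Complete elliptic integrals -/

lemma hasDerivAt_intervalIntegral_of_continuousOn {𝕜 E : Type*} [RCLike 𝕜]
    [NormedAddCommGroup E] [NormedSpace ℝ E] [NormedSpace 𝕜 E] {F F' : 𝕜 → ℝ → E} {U : Set 𝕜}
    {a b : ℝ} {x₀ : 𝕜} (hU : IsOpen U) (hx₀ : x₀ ∈ U) (hF : ∀ x ∈ U, ContinuousOn (F x) (uIcc a b))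
    (hF' : ContinuousOn (Function.uncurry F') (U ×ˢ uIcc a b))
    (h : ∀ x ∈ U, ∀ t ∈ uIcc a b, HasDerivAt (F · t) (F' x t) x) :
    HasDerivAt (fun x => ∫ t in a..b, F x t) (∫ t in a..b, F' x₀ t) x₀ := by
  obtain ⟨ε, hε, hball⟩ := Metric.nhds_basis_closedBall.mem_iff.1 (hU.mem_nhds hx₀)
  obtain ⟨C, hC⟩ := ((isCompact_closedBall x₀ ε).prod
    (isCompact_uIcc (a := a) (b := b))).exists_bound_of_continuousOn
      (hF'.mono (prod_mono hball Subset.rfl))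
  have hF'x₀ : ContinuousOn (F' x₀) (uIcc a b) :=
    hF'.comp (f := fun t => (x₀, t)) (by fun_prop) fun t ht => ⟨hx₀, ht⟩
  refine (intervalIntegral.hasDerivAt_integral_of_dominated_loc_of_deriv_le
    (bound := fun _ => C) (Metric.closedBall_mem_nhds x₀ hε) ?_ (hF x₀ hx₀).intervalIntegrable
    hF'x₀.intervalIntegrable.aestronglyMeasurable_restrict_uIoc
    (ae_of_all _ fun t ht x hx => hC (x, t) ⟨hx, uIoc_subset_uIcc ht⟩) intervalIntegrable_const
    (ae_of_all _ fun t ht x hx => h x (hball hx) t (uIoc_subset_uIcc ht))).2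
  filter_upwards [hU.mem_nhds hx₀] with x hx
  exact (hF x hx).intervalIntegrable.aestronglyMeasurable_restrict_uIoc

lemma integral_cos_smul_comp_sin {E : Type*} [NormedAddCommGroup E] [NormedSpace ℝ E]
    (f : ℝ → E) : ∫ θ in (0 : ℝ)..(π / 2), cos θ • f (sin θ) = ∫ x in (0 : ℝ)..1, f x := by
  have h := intervalIntegral.integral_deriv_smul_comp_of_deriv_nonneg (a := 0) (b := π / 2)
    (g := f) continuousOn_sin (fun θ _ => hasDerivAt_sin θ) fun θ hθ => ?_
  · simpa using h
  · rw [min_eq_left (by positivity), max_eq_right (by positivity)] at hθ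
    exact cos_nonneg_of_mem_Icc ⟨by linarith [hθ.1, pi_pos], hθ.2.le⟩

/-- The amplitude factor `Δ(k, θ) = √(1 - k² sin² θ)` of the trigonometric (Legendre) form of the
elliptic integrals. -/
noncomputable def ellDelta (k θ : ℝ) : ℝ := √(1 - k ^ 2 * sin θ ^ 2)

/-- The complementary integral `E'(k) = E(√(1 - k²))`. -/
noncomputable def EllE' (k : ℝ) : ℝ := EllE √(1 - k ^ 2)

lemma one_sub_sq_mul_sin_sq_pos {k : ℝ} (hk : k ∈ Ioo (-1) 1) (θ : ℝ) :
    0 < 1 - k ^ 2 * sin θ ^ 2 := by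
  have h1 : k ^ 2 < 1 := by rw [sq_lt_one_iff_abs_lt_one, abs_lt]; exact hk
  nlinarith [sq_nonneg k, sq_nonneg (sin θ), sin_sq_le_one θ]

lemma ellDelta_pos {k : ℝ} (hk : k ∈ Ioo (-1) 1) (θ : ℝ) : 0 < ellDelta k θ :=
  sqrt_pos.2 (one_sub_sq_mul_sin_sq_pos hk θ)

lemma sq_ellDelta {k : ℝ} (hk : k ∈ Ioo (-1) 1) (θ : ℝ) :
    ellDelta k θ ^ 2 = 1 - k ^ 2 * sin θ ^ 2 :=
  sq_sqrt (one_sub_sq_mul_sin_sq_pos hk θ).le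

lemma ellDelta_le_one (k θ : ℝ) : ellDelta k θ ≤ 1 := by
  rw [ellDelta, sqrt_le_one]
  nlinarith [mul_nonneg (sq_nonneg k) (sq_nonneg (sin θ))]

lemma continuous_uncurry_ellDelta : Continuous (Function.uncurry ellDelta) := by
  simp only [Function.uncurry_def, ellDelta]
  fun_prop

lemma continuous_ellDelta (k : ℝ) : Continuous (ellDelta k) :=
  continuous_uncurry_ellDelta.comp (Continuous.prodMk_right k)

lemma continuous_inv_ellDelta {k : ℝ} (hk : k ∈ Ioo (-1) 1) :
    Continuous fun θ => (ellDelta k θ)⁻¹ :=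
  (continuous_ellDelta k).inv₀ fun θ => (ellDelta_pos hk θ).ne'

lemma hasDerivAt_ellDelta_left {k : ℝ} (hk : k ∈ Ioo (-1) 1) (θ : ℝ) :
    HasDerivAt (ellDelta · θ) (-(k * sin θ ^ 2) / ellDelta k θ) k := by
  have h := ((hasDerivAt_pow 2 k).mul_const (sin θ ^ 2)).const_sub 1
  refine (h.sqrt (one_sub_sq_mul_sin_sq_pos hk θ).ne').congr_deriv ?_
  have := ellDelta_pos hk θ
  rw [ellDelta] at this ⊢
  field_simp
  push_cast
  ring

lemma hasDerivAt_ellDelta_right {k : ℝ} (hk : k ∈ Ioo (-1) 1) (θ : ℝ) :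
    HasDerivAt (ellDelta k) (-(k ^ 2 * sin θ * cos θ) / ellDelta k θ) θ := by
  have h := (((hasDerivAt_sin θ).pow 2).const_mul (k ^ 2)).const_sub 1
  refine (h.sqrt (one_sub_sq_mul_sin_sq_pos hk θ).ne').congr_deriv ?_
  have := ellDelta_pos hk θ
  rw [ellDelta] at this ⊢
  simp only [Pi.pow_apply]
  field_simp
  push_cast
  ring

lemma EllK_eq_integral_ellDelta (k : ℝ) :
    EllK k = ∫ θ in (0 : ℝ)..(π / 2), (ellDelta k θ)⁻¹ := by
  rw [EllK, ← integral_cos_smul_comp_sin]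
  refine intervalIntegral.integral_congr_Ioo_of_le (by positivity) fun θ hθ => ?_
  have hc : 0 < cos θ := cos_pos_of_mem_Ioo ⟨by linarith [hθ.1, pi_pos], hθ.2⟩
  simp only [smul_eq_mul, ellDelta]
  rw [← cos_sq', sqrt_mul (sq_nonneg _), sqrt_sq hc.le]
  field_simp

lemma EllE_eq_integral_ellDelta (k : ℝ) :
    EllE k = ∫ θ in (0 : ℝ)..(π / 2), ellDelta k θ := by
  rw [EllE, ← integral_cos_smul_comp_sin]
  refine intervalIntegral.integral_congr_Ioo_of_le (by positivity) fun θ hθ => ?_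
  have hc : 0 < cos θ := cos_pos_of_mem_Ioo ⟨by linarith [hθ.1, pi_pos], hθ.2⟩
  simp only [smul_eq_mul, ellDelta]
  rw [← cos_sq', sqrt_div' _ (sq_nonneg _), sqrt_sq hc.le]
  field_simp

lemma continuous_EllE : Continuous EllE := by
  simp only [funext EllE_eq_integral_ellDelta]
  exact intervalIntegral.continuous_parametric_intervalIntegral_of_continuous'
    continuous_uncurry_ellDelta 0 (π / 2)

lemma EllE_zero : EllE 0 = π / 2 := by simp [EllE_eq_integral_ellDelta, ellDelta]

lemma EllE_one : EllE 1 = 1 := by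
  have h : ∫ θ in (0 : ℝ)..(π / 2), ellDelta 1 θ = ∫ θ in (0 : ℝ)..(π / 2), cos θ := by
    refine intervalIntegral.integral_congr_Ioo_of_le (by positivity) fun θ hθ => ?_
    have hc : 0 < cos θ := cos_pos_of_mem_Ioo ⟨by linarith [hθ.1, pi_pos], hθ.2⟩
    rw [ellDelta, one_pow, one_mul, ← cos_sq', sqrt_sq hc.le]
  simp [EllE_eq_integral_ellDelta, h]

lemma EllE_eq_integral_inv_cube {k : ℝ} (hk : k ∈ Ioo (-1) 1) :
    EllE k = (1 - k ^ 2) * ∫ θ in (0 : ℝ)..(π / 2), (ellDelta k θ)⁻¹ ^ 3 := by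
  have hprimitive : ∀ θ ∈ uIcc (0 : ℝ) (π / 2), HasDerivAt
      (fun θ => k ^ 2 * (sin θ * cos θ) / ellDelta k θ)
      (ellDelta k θ - (1 - k ^ 2) * (ellDelta k θ)⁻¹ ^ 3) θ := by
    intro θ _
    have hpos := ellDelta_pos hk θ
    refine ((((hasDerivAt_sin θ).mul (hasDerivAt_cos θ)).const_mul (k ^ 2)).div
      (hasDerivAt_ellDelta_right hk θ) hpos.ne').congr_deriv ?_
    have hsq := sq_ellDelta hk θ
    simp only [Pi.mul_apply]
    field_simp
    rw [cos_sq', show ellDelta k θ ^ 4 = (ellDelta k θ ^ 2) ^ 2 by ring, hsq]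
    ring
  have hE := (continuous_ellDelta k).intervalIntegrable (μ := volume) 0 (π / 2)
  have hI : IntervalIntegrable (fun θ => (1 - k ^ 2) * (ellDelta k θ)⁻¹ ^ 3) volume 0 (π / 2) :=
    (((continuous_inv_ellDelta hk).pow 3).const_mul _).intervalIntegrable _ _
  have h := intervalIntegral.integral_eq_sub_of_hasDerivAt hprimitive (hE.sub hI)
  rw [intervalIntegral.integral_sub hE hI, intervalIntegral.integral_const_mul,
    ← EllE_eq_integral_ellDelta] at h
  simp only [cos_pi_div_two, sin_zero, mul_zero, zero_mul, zero_div, sub_self] at h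
  linarith

lemma hasDerivAt_EllK {k : ℝ} (hk : k ∈ Ioo (-1) 1) (hk0 : k ≠ 0) :
    HasDerivAt EllK ((EllE k / (1 - k ^ 2) - EllK k) / k) k := by
  have h := hasDerivAt_intervalIntegral_of_continuousOn (a := 0) (b := π / 2) (x₀ := k)
    (F := fun k θ => (ellDelta k θ)⁻¹)
    (F' := fun k θ => k * sin θ ^ 2 * (ellDelta k θ)⁻¹ ^ 3) isOpen_Ioo hk
    (fun x hx => (continuous_inv_ellDelta hx).continuousOn) ?_ fun x hx θ _ => ?_
  · simp only [← EllK_eq_integral_ellDelta] at h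
    refine h.congr_deriv ?_
    have hk2 : 1 - k ^ 2 ≠ 0 := by nlinarith [hk.1, hk.2]
    have hK := (continuous_inv_ellDelta hk).intervalIntegrable (μ := volume) 0 (π / 2)
    have hI : IntervalIntegrable (fun θ => (ellDelta k θ)⁻¹ ^ 3) volume 0 (π / 2) :=
      ((continuous_inv_ellDelta hk).pow 3).intervalIntegrable _ _
    rw [EllE_eq_integral_inv_cube hk, mul_div_cancel_left₀ _ hk2, eq_div_iff hk0, mul_comm,
      EllK_eq_integral_ellDelta, ← intervalIntegral.integral_const_mul,
      ← intervalIntegral.integral_sub hI hK]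
    refine intervalIntegral.integral_congr fun θ _ => ?_
    have hpos := ellDelta_pos hk θ
    have hsq := sq_ellDelta hk θ
    field_simp
    linarith
  · refine ContinuousOn.mul (by fun_prop)
      ((continuous_uncurry_ellDelta.continuousOn.inv₀ ?_).pow 3)
    exact fun p hp => (ellDelta_pos hp.1 p.2).ne'
  · have hpos := ellDelta_pos hx θ
    refine ((hasDerivAt_ellDelta_left hx θ).inv hpos.ne').congr_deriv ?_
    field_simp

lemma hasDerivAt_EllE {k : ℝ} (hk : k ∈ Ioo (-1) 1) (hk0 : k ≠ 0) :
    HasDerivAt EllE ((EllE k - EllK k) / k) k := by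
  have h := hasDerivAt_intervalIntegral_of_continuousOn (a := 0) (b := π / 2) (x₀ := k)
    (F := ellDelta) (F' := fun k θ => -(k * sin θ ^ 2) / ellDelta k θ) isOpen_Ioo hk
    (fun x _ => (continuous_ellDelta x).continuousOn) ?_
    fun x hx θ _ => hasDerivAt_ellDelta_left hx θ
  · simp only [← EllE_eq_integral_ellDelta] at h
    refine h.congr_deriv ?_
    rw [EllE_eq_integral_ellDelta, EllK_eq_integral_ellDelta, eq_div_iff hk0, mul_comm,
      ← intervalIntegral.integral_const_mul, ← intervalIntegral.integral_sub
      ((continuous_ellDelta k).intervalIntegrable _ _)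
      ((continuous_inv_ellDelta hk).intervalIntegrable _ _)]
    refine intervalIntegral.integral_congr fun θ _ => ?_
    have hpos := ellDelta_pos hk θ
    have hsq := sq_ellDelta hk θ
    field_simp
    linarith
  · refine ContinuousOn.div (by fun_prop) continuous_uncurry_ellDelta.continuousOn ?_
    exact fun p hp => (ellDelta_pos hp.1 p.2).ne'

lemma EllK_pos {k : ℝ} (hk : k ∈ Ioo (-1) 1) : 0 < EllK k := by
  rw [EllK_eq_integral_ellDelta]
  exact intervalIntegral.intervalIntegral_pos_of_pos
    ((continuous_inv_ellDelta hk).intervalIntegrable _ _)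
    (fun θ => inv_pos.2 (ellDelta_pos hk θ)) (by positivity)

lemma EllK_le {k : ℝ} (hk : k ∈ Ioo (-1) 1) : EllK k ≤ π / 2 / √(1 - k ^ 2) := by
  have hk2 : k ^ 2 < 1 := by rw [sq_lt_one_iff_abs_lt_one, abs_lt]; exact hk
  have h : EllK k ≤ ∫ _ in (0 : ℝ)..(π / 2), (√(1 - k ^ 2))⁻¹ := by
    rw [EllK_eq_integral_ellDelta]
    refine intervalIntegral.integral_mono (by positivity)
      ((continuous_inv_ellDelta hk).intervalIntegrable _ _) intervalIntegrable_const fun θ => ?_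
    exact inv_anti₀ (sqrt_pos.2 (by linarith))
      (sqrt_le_sqrt (by nlinarith [sq_nonneg k, sin_sq_le_one θ]))
  simpa [div_eq_mul_inv] using h

lemma EllE_le_EllK {k : ℝ} (hk : k ∈ Ioo (-1) 1) : EllE k ≤ EllK k := by
  rw [EllE_eq_integral_ellDelta, EllK_eq_integral_ellDelta]
  refine intervalIntegral.integral_mono (by positivity)
    ((continuous_ellDelta k).intervalIntegrable _ _)
    ((continuous_inv_ellDelta hk).intervalIntegrable _ _) fun θ => ?_
  exact (ellDelta_le_one k θ).trans ((one_le_inv₀ (ellDelta_pos hk θ)).2 (ellDelta_le_one k θ))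

lemma EllK_sub_EllE_le {k : ℝ} (hk : k ∈ Ioo (-1) 1) : EllK k - EllE k ≤ k ^ 2 * EllK k := by
  have hE := (continuous_ellDelta k).intervalIntegrable (μ := volume) 0 (π / 2)
  have hK := (continuous_inv_ellDelta hk).intervalIntegrable (μ := volume) 0 (π / 2)
  rw [EllK_eq_integral_ellDelta, EllE_eq_integral_ellDelta, ← intervalIntegral.integral_sub hK hE,
    ← intervalIntegral.integral_const_mul]
  refine intervalIntegral.integral_mono (by positivity) (hK.sub hE) (hK.const_mul _) fun θ => ?_
  have hpos := ellDelta_pos hk θ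
  have hsq := sq_ellDelta hk θ
  simp only
  rw [← div_eq_mul_inv, le_div_iff₀ hpos, sub_mul, inv_mul_cancel₀ hpos.ne']
  nlinarith [sq_nonneg k, sin_sq_le_one θ]

lemma tendsto_EllK_zero : Tendsto EllK (𝓝 0) (𝓝 (π / 2)) := by
  have hE : Tendsto EllE (𝓝 0) (𝓝 (π / 2)) := by
    simpa only [EllE_zero] using continuous_EllE.tendsto 0
  have hbound : Tendsto (fun x : ℝ => π / 2 / √(1 - x ^ 2)) (𝓝 0) (𝓝 (π / 2)) := by
    have : ContinuousAt (fun x : ℝ => π / 2 / √(1 - x ^ 2)) 0 :=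
      ContinuousAt.div (by fun_prop) (by fun_prop) (by simp)
    simpa using this.tendsto
  have hmem : Ioo (-1 : ℝ) 1 ∈ 𝓝 0 := Ioo_mem_nhds (by norm_num) one_pos
  refine tendsto_of_tendsto_of_tendsto_of_le_of_le' hE hbound ?_ ?_
  · filter_upwards [hmem] with x hx using EllE_le_EllK hx
  · filter_upwards [hmem] with x hx using EllK_le hx

/-! ### Complementary integrals and Legendre's relation -/

lemma Ioo_zero_one_subset : Ioo (0 : ℝ) 1 ⊆ Ioo (-1) 1 := Ioo_subset_Ioo_left (by norm_num)

lemma one_sub_sq_pos {k : ℝ} (hk : k ∈ Ioo (0 : ℝ) 1) : 0 < 1 - k ^ 2 := by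
  nlinarith [hk.1, hk.2]

lemma sqrt_one_sub_sq_mem {k : ℝ} (hk : k ∈ Ioo (0 : ℝ) 1) : √(1 - k ^ 2) ∈ Ioo (0 : ℝ) 1 := by
  refine ⟨sqrt_pos.2 (one_sub_sq_pos hk), ?_⟩
  rw [sqrt_lt' one_pos]
  nlinarith [hk.1]

lemma sqrt_one_sub_sqrt_sq {k : ℝ} (hk : k ∈ Icc (0 : ℝ) 1) : √(1 - √(1 - k ^ 2) ^ 2) = k := by
  rw [sq_sqrt (by nlinarith [hk.1, hk.2]), sub_sub_cancel, sqrt_sq hk.1]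

lemma hasDerivAt_sqrt_one_sub_sq {k : ℝ} (hk : k ∈ Ioo (-1) 1) :
    HasDerivAt (fun k => √(1 - k ^ 2)) (-k / √(1 - k ^ 2)) k := by
  have hk2 : 0 < 1 - k ^ 2 := by nlinarith [hk.1, hk.2]
  refine (((hasDerivAt_pow 2 k).const_sub 1).sqrt hk2.ne').congr_deriv ?_
  have := sqrt_pos.2 hk2
  field_simp
  push_cast
  ring

lemma EllK'_pos {k : ℝ} (hk : k ∈ Ioo (0 : ℝ) 1) : 0 < EllK' k :=
  EllK_pos (Ioo_zero_one_subset (sqrt_one_sub_sq_mem hk))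

lemma EllK'_le {k : ℝ} (hk : k ∈ Ioo (0 : ℝ) 1) : EllK' k ≤ π / 2 / k := by
  have h := EllK_le (Ioo_zero_one_subset (sqrt_one_sub_sq_mem hk))
  rwa [sqrt_one_sub_sqrt_sq (Ioo_subset_Icc_self hk)] at h

lemma hasDerivAt_EllK' {k : ℝ} (hk : k ∈ Ioo (0 : ℝ) 1) :
    HasDerivAt EllK' ((k ^ 2 * EllK' k - EllE' k) / (k * (1 - k ^ 2))) k := by
  have hm := sqrt_one_sub_sq_mem hk
  refine ((hasDerivAt_EllK (Ioo_zero_one_subset hm) hm.1.ne').comp k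
    (hasDerivAt_sqrt_one_sub_sq (Ioo_zero_one_subset hk))).congr_deriv ?_
  have hsq := sq_sqrt (one_sub_sq_pos hk).le
  have hk0 := hk.1
  have hk2 := one_sub_sq_pos hk
  rw [hsq, sub_sub_cancel, ← EllK', ← EllE']
  field_simp
  rw [hsq]
  ring

lemma hasDerivAt_EllE' {k : ℝ} (hk : k ∈ Ioo (0 : ℝ) 1) :
    HasDerivAt EllE' (k * (EllK' k - EllE' k) / (1 - k ^ 2)) k := by
  have hm := sqrt_one_sub_sq_mem hk
  refine ((hasDerivAt_EllE (Ioo_zero_one_subset hm) hm.1.ne').comp k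
    (hasDerivAt_sqrt_one_sub_sq (Ioo_zero_one_subset hk))).congr_deriv ?_
  have hsq := sq_sqrt (one_sub_sq_pos hk).le
  have hk2 := one_sub_sq_pos hk
  rw [← EllK', ← EllE']
  field_simp
  rw [hsq]
  ring

lemma tendsto_EllK'_one : Tendsto EllK' (𝓝 1) (𝓝 (π / 2)) := by
  have h : Continuous fun k : ℝ => √(1 - k ^ 2) := by fun_prop
  exact tendsto_EllK_zero.comp (by simpa using h.tendsto 1)

lemma tendsto_EllE'_zero : Tendsto EllE' (𝓝 0) (𝓝 1) := by
  have h : Continuous EllE' := continuous_EllE.comp (by fun_prop)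
  simpa [EllE', EllE_one] using h.tendsto 0

lemma tendsto_EllK_sub_EllE_mul_EllK' :
    Tendsto (fun k => (EllK k - EllE k) * EllK' k) (𝓝[>] 0) (𝓝 0) := by
  have hmem : Ioo (0 : ℝ) 1 ∈ 𝓝[>] 0 := Ioo_mem_nhdsGT one_pos
  have hbound : Tendsto (fun k => k * EllK k * (π / 2)) (𝓝[>] 0) (𝓝 0) := by
    have h := (tendsto_id.mul tendsto_EllK_zero).mul_const (π / 2)
    simp only [id_eq, zero_mul] at h
    exact h.mono_left nhdsWithin_le_nhds
  refine tendsto_of_tendsto_of_tendsto_of_le_of_le' tendsto_const_nhds hbound ?_ ?_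
  · filter_upwards [hmem] with k hk
    exact mul_nonneg (sub_nonneg.2 (EllE_le_EllK (Ioo_zero_one_subset hk))) (EllK'_pos hk).le
  · filter_upwards [hmem] with k hk
    have hk0 := hk.1
    have hK := EllK_pos (Ioo_zero_one_subset hk)
    calc (EllK k - EllE k) * EllK' k
        ≤ (k ^ 2 * EllK k) * (π / 2 / k) :=
          mul_le_mul (EllK_sub_EllE_le (Ioo_zero_one_subset hk)) (EllK'_le hk) (EllK'_pos hk).le
            (by positivity)
      _ = k * EllK k * (π / 2) := by field_simp

theorem legendre_relation {k : ℝ} (hk : k ∈ Ioo (0 : ℝ) 1) :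
    EllE k * EllK' k + EllE' k * EllK k - EllK k * EllK' k = π / 2 := by
  set f : ℝ → ℝ := fun k => EllE k * EllK' k + EllE' k * EllK k - EllK k * EllK' k with hf
  have hderiv : ∀ x ∈ Ioo (0 : ℝ) 1, HasDerivAt f 0 x := by
    intro x hx
    have hK := hasDerivAt_EllK (Ioo_zero_one_subset hx) hx.1.ne'
    have hK' := hasDerivAt_EllK' hx
    refine ((((hasDerivAt_EllE (Ioo_zero_one_subset hx) hx.1.ne').mul hK').add
      ((hasDerivAt_EllE' hx).mul hK)).sub (hK.mul hK')).congr_deriv ?_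
    have hx0 := hx.1
    have hx2 := one_sub_sq_pos hx
    field_simp
    ring
  have hconst : ∀ x ∈ Ioo (0 : ℝ) 1, f k = f x := fun x hx =>
    isOpen_Ioo.is_const_of_deriv_eq_zero isPreconnected_Ioo
      (fun y hy => (hderiv y hy).differentiableAt.differentiableWithinAt)
      (fun y hy => (hderiv y hy).deriv) hk hx
  have hlim_const : Tendsto f (𝓝[>] 0) (𝓝 (f k)) := by
    refine tendsto_const_nhds.congr' ?_
    filter_upwards [Ioo_mem_nhdsGT one_pos] with x hx using hconst x hx
  have hlim : Tendsto f (𝓝[>] 0) (𝓝 (π / 2)) := by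
    have h := ((tendsto_EllE'_zero.mul tendsto_EllK_zero).mono_left nhdsWithin_le_nhds).sub
      tendsto_EllK_sub_EllE_mul_EllK'
    rw [one_mul, sub_zero] at h
    refine h.congr fun x => ?_
    simp only [hf]
    ring
  exact tendsto_nhds_unique hlim_const hlim

/-- The period ratio `K / K'`, the coordinate in which the theta functions are evaluated. -/
noncomputable def periodRatio (k : ℝ) : ℝ := EllK k / EllK' k

lemma periodRatio_pos {k : ℝ} (hk : k ∈ Ioo (0 : ℝ) 1) : 0 < periodRatio k :=
  div_pos (EllK_pos (Ioo_zero_one_subset hk)) (EllK'_pos hk)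

lemma hasDerivAt_periodRatio {k : ℝ} (hk : k ∈ Ioo (0 : ℝ) 1) :
    HasDerivAt periodRatio (π / 2 / (k * (1 - k ^ 2) * EllK' k ^ 2)) k := by
  have hK' := EllK'_pos hk
  refine ((hasDerivAt_EllK (Ioo_zero_one_subset hk) hk.1.ne').div (hasDerivAt_EllK' hk)
    hK'.ne').congr_deriv ?_
  rw [← legendre_relation hk]
  have hk0 := hk.1
  have hk2 := one_sub_sq_pos hk
  field_simp
  ring

lemma strictMonoOn_periodRatio : StrictMonoOn periodRatio (Ioo 0 1) := by
  refine strictMonoOn_of_deriv_pos (convex_Ioo 0 1)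
    (fun k hk => (hasDerivAt_periodRatio hk).continuousAt.continuousWithinAt) fun k hk => ?_
  rw [interior_Ioo] at hk
  rw [(hasDerivAt_periodRatio hk).deriv]
  have := hk.1
  have := one_sub_sq_pos hk
  have := EllK'_pos hk
  positivity

/-! ### Gauss's integral and the arithmetic-geometric mean -/

/-- Gauss's symmetric form of the complete elliptic integral of the first kind. -/
noncomputable def gaussIntegral (a b : ℝ) : ℝ :=
  ∫ x in Ioi (0 : ℝ), (√((x ^ 2 + a ^ 2) * (x ^ 2 + b ^ 2)))⁻¹

lemma integral_comp_mul_tan {E : Type*} [NormedAddCommGroup E] [NormedSpace ℝ E] {b : ℝ}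
    (hb : 0 < b) (f : ℝ → E) :
    ∫ θ in (0 : ℝ)..(π / 2), (b / cos θ ^ 2) • f (b * tan θ) = ∫ x in Ioi 0, f x := by
  have himg : (fun θ => b * tan θ) '' Ioo 0 (π / 2) = Ioi 0 := by
    refine Subset.antisymm (image_subset_iff.2 fun θ hθ =>
      mul_pos hb (tan_pos_of_pos_of_lt_pi_div_two hθ.1 hθ.2)) fun y hy => ?_
    refine ⟨arctan (y / b), ⟨arctan_pos.2 (div_pos hy hb), arctan_lt_pi_div_two _⟩, ?_⟩
    simp only [tan_arctan]
    field_simp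
  have hsub : Ioo 0 (π / 2) ⊆ Ioo (-(π / 2)) (π / 2) :=
    Ioo_subset_Ioo_left (by linarith [pi_pos])
  have hmono : MonotoneOn (fun θ => b * tan θ) (Ioo 0 (π / 2)) :=
    fun x hx y hy hxy =>
      mul_le_mul_of_nonneg_left (strictMonoOn_tan.monotoneOn (hsub hx) (hsub hy) hxy) hb.le
  have hderiv : ∀ θ ∈ Ioo 0 (π / 2),
      HasDerivWithinAt (fun θ => b * tan θ) (b / cos θ ^ 2) (Ioo 0 (π / 2)) θ := fun θ hθ =>
    (((hasDerivAt_tan (cos_pos_of_mem_Ioo (hsub hθ)).ne').const_mul b).congr_deriv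
      (mul_one_div _ _)).hasDerivWithinAt
  rw [intervalIntegral.integral_of_le (by positivity), integral_Ioc_eq_integral_Ioo, ← himg,
    integral_image_eq_integral_deriv_smul_of_monotoneOn measurableSet_Ioo hderiv hmono]

lemma integral_comp_sub_div {E : Type*} [NormedAddCommGroup E] [NormedSpace ℝ E] {c : ℝ}
    (hc : 0 < c) (f : ℝ → E) :
    ∫ x in Ioi (0 : ℝ), ((1 + c / x ^ 2) / 2) • f ((x - c / x) / 2) = ∫ x, f x := by
  have hmono : MonotoneOn (fun x => (x - c / x) / 2) (Ioi 0) := fun x hx y _ hxy => by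
    have := div_le_div_of_nonneg_left hc.le hx hxy
    simp only
    linarith
  have himg : (fun x => (x - c / x) / 2) '' Ioi 0 = univ := by
    refine eq_univ_of_forall fun u => ?_
    have hpos : 0 < u + √(u ^ 2 + c) := by
      have : √(u ^ 2) < √(u ^ 2 + c) := sqrt_lt_sqrt (sq_nonneg _) (by linarith)
      rw [sqrt_sq_eq_abs] at this
      linarith [neg_abs_le u]
    refine ⟨u + √(u ^ 2 + c), hpos, ?_⟩
    have hsq := sq_sqrt (by positivity : 0 ≤ u ^ 2 + c)
    simp only
    field_simp
    linarith
  have hderiv : ∀ x ∈ Ioi (0 : ℝ),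
      HasDerivWithinAt (fun x => (x - c / x) / 2) ((1 + c / x ^ 2) / 2) (Ioi 0) x := by
    intro x hx
    have hx0 : x ≠ 0 := (mem_Ioi.1 hx).ne'
    refine (((hasDerivAt_id x).sub ((hasDerivAt_const x c).div (hasDerivAt_id x)
      hx0)).div_const 2).hasDerivWithinAt.congr_deriv ?_
    simp only [id_eq]
    ring
  rw [← integral_image_eq_integral_deriv_smul_of_monotoneOn measurableSet_Ioi hderiv hmono, himg,
    Measure.restrict_univ]

lemma gaussIntegral_eq_EllK' {a b : ℝ} (hb : 0 < b) (hab : b ≤ a) :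
    gaussIntegral a b = a⁻¹ * EllK' (b / a) := by
  have ha : 0 < a := hb.trans_le hab
  have hk : 0 ≤ 1 - (b / a) ^ 2 :=
    sub_nonneg.2 (pow_le_one₀ (by positivity) ((div_le_one ha).2 hab))
  rw [gaussIntegral, EllK', EllK_eq_integral_ellDelta, ← integral_comp_mul_tan hb,
    ← intervalIntegral.integral_const_mul]
  refine intervalIntegral.integral_congr_Ioo_of_le (by positivity) fun θ hθ => ?_
  have hc : 0 < cos θ := cos_pos_of_mem_Ioo ⟨by linarith [hθ.1, pi_pos], hθ.2⟩
  have hQ : 0 < a ^ 2 * cos θ ^ 2 + b ^ 2 * sin θ ^ 2 := by positivity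
  have hgauss : ((b * tan θ) ^ 2 + a ^ 2) * ((b * tan θ) ^ 2 + b ^ 2) =
      (b / cos θ ^ 2) ^ 2 * (a ^ 2 * cos θ ^ 2 + b ^ 2 * sin θ ^ 2) := by
    rw [tan_eq_sin_div_cos]
    field_simp
    rw [sin_sq_add_cos_sq]
    ring
  have hdelta : 1 - (1 - (b / a) ^ 2) * sin θ ^ 2 =
      a⁻¹ ^ 2 * (a ^ 2 * cos θ ^ 2 + b ^ 2 * sin θ ^ 2) := by
    rw [cos_sq']
    field_simp
    ring
  simp only [smul_eq_mul, ellDelta]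
  rw [hgauss, sq_sqrt hk, hdelta, sqrt_mul (sq_nonneg _), sqrt_mul (sq_nonneg _),
    sqrt_sq (by positivity), sqrt_sq (by positivity)]
  have := sqrt_pos.2 hQ
  field_simp

lemma gaussIntegral_arith_geom_mean {a b : ℝ} (hab : 0 < a * b) :
    gaussIntegral a b = gaussIntegral ((a + b) / 2) √(a * b) := by
  have heven : ∫ x, (√((x ^ 2 + ((a + b) / 2) ^ 2) * (x ^ 2 + √(a * b) ^ 2)))⁻¹ =
      2 * gaussIntegral ((a + b) / 2) √(a * b) := by
    rw [gaussIntegral, ← integral_comp_abs]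
    simp only [sq_abs]
  suffices h : 2 * gaussIntegral a b = 2 * gaussIntegral ((a + b) / 2) √(a * b) by linarith
  rw [← heven, ← integral_comp_sub_div hab, gaussIntegral, ← integral_const_mul]
  refine setIntegral_congr_fun measurableSet_Ioi fun x hx => ?_
  have hx0 : 0 < x := hx
  have hfactor : (((x - a * b / x) / 2) ^ 2 + ((a + b) / 2) ^ 2) *
      (((x - a * b / x) / 2) ^ 2 + √(a * b) ^ 2) =
      ((1 + a * b / x ^ 2) / 4) ^ 2 * ((x ^ 2 + a ^ 2) * (x ^ 2 + b ^ 2)) := by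
    rw [sq_sqrt hab.le]
    field_simp
    ring
  simp only [smul_eq_mul]
  rw [hfactor, sqrt_mul (sq_nonneg _), sqrt_sq (by positivity)]
  field_simp
  norm_num

lemma EllK'_arith_geom_mean {a b : ℝ} (hb : 0 < b) (hab : b ≤ a) :
    a⁻¹ * EllK' (b / a) = ((a + b) / 2)⁻¹ * EllK' (√(a * b) / ((a + b) / 2)) := by
  have hpos : 0 < a * b := mul_pos (hb.trans_le hab) hb
  rw [← gaussIntegral_eq_EllK' hb hab, gaussIntegral_arith_geom_mean hpos,
    gaussIntegral_eq_EllK' (sqrt_pos.2 hpos)]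
  rw [sqrt_le_left (by linarith)]
  nlinarith [sq_nonneg (a - b)]

lemma EllK'_landen {k : ℝ} (hk : k ∈ Ioc (0 : ℝ) 1) :
    EllK' k = 2 / (1 + k) * EllK ((1 - k) / (1 + k)) := by
  have hk0 := hk.1
  have h := EllK'_arith_geom_mean hk0 hk.2
  rw [inv_one, one_mul, div_one, one_mul] at h
  have hnonneg : 0 ≤ (1 - k) / (1 + k) := div_nonneg (by linarith [hk.2]) (by linarith)
  have hmodulus : 1 - (√k / ((1 + k) / 2)) ^ 2 = ((1 - k) / (1 + k)) ^ 2 := by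
    rw [div_pow, sq_sqrt hk0.le]
    field_simp
    ring
  rw [h, EllK', hmodulus, sqrt_sq hnonneg, inv_div]

/-! ### Involutions of the modulus -/

lemma sqrt_div_half_mem {k : ℝ} (hk : k ∈ Ioo (0 : ℝ) 1) : √k / ((1 + k) / 2) ∈ Ioo (0 : ℝ) 1 := by
  have hk0 := hk.1
  have hlt : √k < 1 := by simpa using sqrt_lt_sqrt hk0.le hk.2
  refine ⟨by positivity, (div_lt_one (by positivity)).2 ?_⟩
  nlinarith [sq_sqrt hk0.le, mul_pos (sub_pos.2 hlt) (sub_pos.2 hlt)]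

lemma EllK'_le_div_sqrt {k : ℝ} (hk : k ∈ Ioo (0 : ℝ) 1) : EllK' k ≤ π / 2 / √k := by
  have hk0 := hk.1
  calc EllK' k = ((1 + k) / 2)⁻¹ * EllK' (√k / ((1 + k) / 2)) := by
        simpa using EllK'_arith_geom_mean hk0 hk.2.le
    _ ≤ ((1 + k) / 2)⁻¹ * (π / 2 / (√k / ((1 + k) / 2))) := by
        gcongr
        exact EllK'_le (sqrt_div_half_mem hk)
    _ = π / 2 / √k := by field_simp

lemma EllK'_le_mul_rpow {k : ℝ} (hk : k ∈ Ioo (0 : ℝ) 1) : EllK' k ≤ π * k ^ (-(1 / 4) : ℝ) := by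
  have hk0 := hk.1
  have hsqrt := sqrt_pos.2 hk0
  have hhalf : 1 ≤ 2 * √((1 + k) / 2) := by
    have : (1 / 2 : ℝ) ≤ √((1 + k) / 2) := le_sqrt_of_sq_le (by linarith)
    linarith
  have hroot : k ^ (-(1 / 4) : ℝ) = 1 / √√k := by
    rw [rpow_neg hk0.le, sqrt_eq_rpow, sqrt_eq_rpow, ← rpow_mul hk0.le, one_div]
    norm_num
  calc EllK' k = ((1 + k) / 2)⁻¹ * EllK' (√k / ((1 + k) / 2)) := by
        simpa using EllK'_arith_geom_mean hk0 hk.2.le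
    _ ≤ ((1 + k) / 2)⁻¹ * (π / 2 / √(√k / ((1 + k) / 2))) := by
        gcongr
        exact EllK'_le_div_sqrt (sqrt_div_half_mem hk)
    _ = π / (2 * √((1 + k) / 2)) * (1 / √√k) := by
        have hmean := sq_sqrt (show 0 ≤ (1 + k) / 2 by positivity)
        have := sqrt_pos.2 (show 0 < (1 + k) / 2 by positivity)
        have := sqrt_pos.2 hsqrt
        rw [sqrt_div hsqrt.le]
        nth_rw 1 [← hmean]
        field_simp
    _ ≤ π * k ^ (-(1 / 4) : ℝ) := by
        rw [hroot]
        gcongr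
        exact div_le_self pi_pos.le hhalf

lemma intervalIntegrable_EllK'_cube :
    IntervalIntegrable (fun k => EllK' k ^ 3) volume 0 1 := by
  have hcont : ContinuousOn EllK' (Ioo 0 1) := fun k hk =>
    (hasDerivAt_EllK' hk).continuousAt.continuousWithinAt
  have hbound : IntegrableOn (fun k : ℝ => π ^ 3 * k ^ (-(3 / 4) : ℝ)) (Ioo 0 1) :=
    ((intervalIntegrable_iff_integrableOn_Ioo_of_le zero_le_one).1
      (intervalIntegral.intervalIntegrable_rpow' (by norm_num))).const_mul _
  rw [intervalIntegrable_iff_integrableOn_Ioo_of_le zero_le_one]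
  refine hbound.mono' ((hcont.pow 3).aestronglyMeasurable measurableSet_Ioo) ?_
  filter_upwards [ae_restrict_mem measurableSet_Ioo] with k hk
  rw [norm_of_nonneg (pow_pos (EllK'_pos hk) 3).le]
  calc EllK' k ^ 3 ≤ (π * k ^ (-(1 / 4) : ℝ)) ^ 3 :=
        pow_le_pow_left₀ (EllK'_pos hk).le (EllK'_le_mul_rpow hk) 3
    _ = π ^ 3 * k ^ (-(3 / 4) : ℝ) := by
        rw [mul_pow, ← rpow_mul_natCast hk.1.le]
        norm_num

lemma intervalIntegrable_mul_EllK'_cube :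
    IntervalIntegrable (fun k => k * EllK' k ^ 3) volume 0 1 :=
  intervalIntegrable_EllK'_cube.continuousOn_mul continuousOn_id

lemma integral_mul_EllK'_cube_pos : 0 < ∫ k in (0 : ℝ)..1, k * EllK' k ^ 3 :=
  intervalIntegral.intervalIntegral_pos_of_pos_on intervalIntegrable_mul_EllK'_cube
    (fun _ hk => mul_pos hk.1 (pow_pos (EllK'_pos hk) 3)) one_pos

lemma integral_comp_sqrt_one_sub_sq {E : Type*} [NormedAddCommGroup E] [NormedSpace ℝ E]
    (f : ℝ → E) :
    ∫ k in (0 : ℝ)..1, (k / √(1 - k ^ 2)) • f √(1 - k ^ 2) = ∫ k in (0 : ℝ)..1, f k := by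
  have hderiv : ∀ k ∈ Ioo (min (0 : ℝ) 1) (max 0 1),
      HasDerivAt (fun k => √(1 - k ^ 2)) (-k / √(1 - k ^ 2)) k := by
    rw [min_eq_left zero_le_one, max_eq_right zero_le_one]
    exact fun k hk => hasDerivAt_sqrt_one_sub_sq (Ioo_zero_one_subset hk)
  have h := intervalIntegral.integral_deriv_smul_comp_of_deriv_nonpos (g := f)
    (Continuous.continuousOn (by fun_prop)) hderiv fun k hk => by
      rw [min_eq_left zero_le_one] at hk
      exact div_nonpos_of_nonpos_of_nonneg (neg_nonpos.2 hk.1.le) (sqrt_nonneg _)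
  simp only [neg_div, neg_smul, intervalIntegral.integral_neg, Function.comp_apply, one_pow,
    sub_self, sqrt_zero, zero_pow two_ne_zero, sub_zero, sqrt_one] at h
  rwa [intervalIntegral.integral_symm 0 1, neg_inj] at h

lemma integral_comp_one_sub_div_one_add {E : Type*} [NormedAddCommGroup E] [NormedSpace ℝ E]
    (f : ℝ → E) :
    ∫ k in (0 : ℝ)..1, (2 / (1 + k) ^ 2) • f ((1 - k) / (1 + k)) = ∫ k in (0 : ℝ)..1, f k := by
  have hderiv {k : ℝ} (hk : 0 ≤ k) :
      HasDerivAt (fun k : ℝ => (1 - k) / (1 + k)) (-(2 / (1 + k) ^ 2)) k := by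
    refine (((hasDerivAt_id' k).const_sub 1).div ((hasDerivAt_id' k).const_add 1)
      (by positivity)).congr_deriv ?_
    ring
  have h := intervalIntegral.integral_deriv_smul_comp_of_deriv_nonpos (a := 0) (b := 1) (g := f)
    (f := fun k => (1 - k) / (1 + k)) (f' := fun k => -(2 / (1 + k) ^ 2)) (fun k hk => ?_)
    (fun k hk => ?_) fun k _ => by simp only [Left.neg_nonpos_iff]; positivity
  · simp only [neg_smul, intervalIntegral.integral_neg, Function.comp_apply, sub_self, zero_div,
      sub_zero, add_zero, div_one] at h
    rwa [intervalIntegral.integral_symm 0 1, neg_inj] at h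
  · rw [uIcc_of_le zero_le_one] at hk
    exact (hderiv hk.1).continuousAt.continuousWithinAt
  · rw [min_eq_left zero_le_one] at hk
    exact hderiv hk.1.le

lemma integral_mul_EllK_cube_eq_integral_mul_EllK'_cube :
    ∫ k in (0 : ℝ)..1, k * EllK k ^ 3 = ∫ k in (0 : ℝ)..1, k * EllK' k ^ 3 := by
  rw [← integral_comp_sqrt_one_sub_sq]
  refine intervalIntegral.integral_congr_Ioo_of_le zero_le_one fun k hk => ?_
  have hm := (sqrt_one_sub_sq_mem hk).1
  simp only [smul_eq_mul, EllK']
  field_simp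

lemma integral_mul_EllK_cube_eq_integral_one_sub_mul_EllK'_cube :
    ∫ k in (0 : ℝ)..1, k * EllK k ^ 3 = ∫ k in (0 : ℝ)..1, (1 - k) / 4 * EllK' k ^ 3 := by
  rw [← integral_comp_one_sub_div_one_add]
  refine intervalIntegral.integral_congr_Ioo_of_le zero_le_one fun k hk => ?_
  have hk0 := hk.1
  simp only [smul_eq_mul, EllK'_landen (Ioo_subset_Ioc_self hk)]
  field_simp
  ring

theorem integral_EllK'_cube_eq_five_mul :
    ∫ k in (0 : ℝ)..1, EllK' k ^ 3 = 5 * ∫ k in (0 : ℝ)..1, k * EllK' k ^ 3 := by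
  have hsqrt := integral_mul_EllK_cube_eq_integral_mul_EllK'_cube
  have hlanden : ∫ k in (0 : ℝ)..1, k * EllK k ^ 3 =
      1 / 4 * ((∫ k in (0 : ℝ)..1, EllK' k ^ 3) - ∫ k in (0 : ℝ)..1, k * EllK' k ^ 3) := by
    rw [integral_mul_EllK_cube_eq_integral_one_sub_mul_EllK'_cube,
      ← intervalIntegral.integral_sub intervalIntegrable_EllK'_cube
        intervalIntegrable_mul_EllK'_cube, ← intervalIntegral.integral_const_mul]
    exact intervalIntegral.integral_congr fun k _ => by ring
  linarith

/-! ### Theta constants -/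

/-- The theta constant `θ₃` at the nome `exp (-π t)`. -/
noncomputable def theta (t : ℝ) : ℝ := ∑' n : ℤ, exp (-π * n ^ 2 * t)

/-- The theta constant `θ₄` at the nome `exp (-π t)`. -/
noncomputable def thetaAlt (t : ℝ) : ℝ := ∑' n : ℤ, (-1) ^ n * exp (-π * n ^ 2 * t)

lemma summable_abs_pow_mul_exp (j : ℕ) {t : ℝ} (ht : 0 < t) :
    Summable fun n : ℤ => |(n : ℝ)| ^ j * exp (-π * n ^ 2 * t) := by
  refine (summable_pow_mul_jacobiTheta₂_term_bound 0 ht j).congr fun n => ?_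
  push_cast
  congr 2
  ring

lemma summable_theta {t : ℝ} (ht : 0 < t) : Summable fun n : ℤ => exp (-π * n ^ 2 * t) := by
  simpa using summable_abs_pow_mul_exp 0 ht

lemma norm_neg_one_zpow_mul_exp (n : ℤ) (x : ℝ) : ‖(-1 : ℝ) ^ n * exp x‖ = exp x := by
  rw [norm_mul, norm_zpow, norm_neg, norm_one, one_zpow, one_mul, norm_eq_abs, abs_exp]

lemma summable_norm_thetaAlt {t : ℝ} (ht : 0 < t) :
    Summable fun n : ℤ => ‖(-1 : ℝ) ^ n * exp (-π * n ^ 2 * t)‖ := by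
  simpa only [norm_neg_one_zpow_mul_exp] using summable_theta ht

-- Only the index pairs `(a, b)` with `a + b` even survive; they are the pairs `(m + n, m - n)`.
lemma tsum_one_add_neg_one_zpow_mul {R : Type*} [DivisionRing R] [TopologicalSpace R]
    (f : ℤ × ℤ → R) :
    ∑' p : ℤ × ℤ, (1 + (-1) ^ (p.1 + p.2)) * f p =
      ∑' p : ℤ × ℤ, 2 * f (p.1 + p.2, p.1 - p.2) := by
  have hinj : Function.Injective fun p : ℤ × ℤ => (p.1 + p.2, p.1 - p.2) := by
    rintro ⟨a, b⟩ ⟨c, d⟩ h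
    simp only [Prod.mk.injEq] at h ⊢
    omega
  rw [← hinj.tsum_eq (f := fun p : ℤ × ℤ => (1 + (-1 : R) ^ (p.1 + p.2)) * f p)]
  · refine tsum_congr fun p => ?_
    have heven : Even (p.1 + p.2 + (p.1 - p.2)) := ⟨p.1, by ring⟩
    rw [heven.neg_one_zpow, one_add_one_eq_two]
  · rintro ⟨m, n⟩ h
    rcases Int.even_or_odd (m + n) with ⟨a, ha⟩ | hodd
    · refine ⟨(a, m - a), ?_⟩
      simp only [Prod.mk.injEq]
      omega
    · simp [hodd.neg_one_zpow] at h

lemma exp_add_sq_mul_exp_sub_sq (m n : ℤ) (t : ℝ) :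
    exp (-π * (m + n : ℤ) ^ 2 * t) * exp (-π * (m - n : ℤ) ^ 2 * t) =
      exp (-π * m ^ 2 * (2 * t)) * exp (-π * n ^ 2 * (2 * t)) := by
  rw [← exp_add, ← exp_add]
  push_cast
  congr 1
  ring

lemma theta_sq_add_thetaAlt_sq {t : ℝ} (ht : 0 < t) :
    theta t ^ 2 + thetaAlt t ^ 2 = 2 * theta (2 * t) ^ 2 := by
  have hθ := (summable_theta ht).norm
  have hα := summable_norm_thetaAlt ht
  have hθ₂ := (summable_theta (mul_pos two_pos ht)).norm
  rw [theta, theta, thetaAlt, sq, sq, sq, tsum_mul_tsum_of_summable_norm hθ hθ,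
    tsum_mul_tsum_of_summable_norm hα hα, tsum_mul_tsum_of_summable_norm hθ₂ hθ₂,
    ← (summable_mul_of_summable_norm hθ hθ).tsum_add (summable_mul_of_summable_norm hα hα),
    ← tsum_mul_left]
  refine Eq.trans (tsum_congr fun p => ?_) ((tsum_one_add_neg_one_zpow_mul fun p =>
    exp (-π * p.1 ^ 2 * t) * exp (-π * p.2 ^ 2 * t)).trans (tsum_congr fun p => ?_))
  · rw [zpow_add₀ (by norm_num)]
    ring
  · rw [exp_add_sq_mul_exp_sub_sq]

lemma theta_mul_thetaAlt {t : ℝ} (ht : 0 < t) : theta t * thetaAlt t = thetaAlt (2 * t) ^ 2 := by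
  have hθ := (summable_theta ht).norm
  have hα := summable_norm_thetaAlt ht
  have hα₂ := summable_norm_thetaAlt (mul_pos two_pos ht)
  suffices h : thetaAlt t * theta t + theta t * thetaAlt t = 2 * thetaAlt (2 * t) ^ 2 by linarith
  rw [theta, thetaAlt, thetaAlt, sq, tsum_mul_tsum_of_summable_norm hθ hα,
    tsum_mul_tsum_of_summable_norm hα hθ, tsum_mul_tsum_of_summable_norm hα₂ hα₂,
    ← (summable_mul_of_summable_norm hα hθ).tsum_add (summable_mul_of_summable_norm hθ hα),
    ← tsum_mul_left]
  refine Eq.trans (tsum_congr fun p => ?_) ((tsum_one_add_neg_one_zpow_mul fun p =>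
    (-1 : ℝ) ^ p.1 * (exp (-π * p.1 ^ 2 * t) * exp (-π * p.2 ^ 2 * t))).trans
    (tsum_congr fun p => ?_))
  · have hsq : (-1 : ℝ) ^ p.1 * (-1) ^ p.1 = 1 := by
      rw [← zpow_add₀ (by norm_num), (Even.add_self p.1).neg_one_zpow]
    rw [zpow_add₀ (by norm_num)]
    linear_combination (-(-1 : ℝ) ^ p.2 *
      (exp (-π * p.1 ^ 2 * t) * exp (-π * p.2 ^ 2 * t))) * hsq
  · rw [exp_add_sq_mul_exp_sub_sq, zpow_add₀ (by norm_num)]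
    ring

lemma theta_pos {t : ℝ} (ht : 0 < t) : 0 < theta t :=
  (summable_theta ht).tsum_pos (fun _ => (exp_pos _).le) 0 (exp_pos _)

lemma theta_one_div_sq {t : ℝ} (ht : 0 < t) : theta (1 / t) ^ 2 = t * theta t ^ 2 := by
  have hleft : theta t = ∑' n : ℤ, exp (-π * t * n ^ 2) := tsum_congr fun n => by ring_nf
  have hright : theta (1 / t) = ∑' n : ℤ, exp (-π / t * n ^ 2) := tsum_congr fun n => by ring_nf
  rw [hleft, Real.tsum_exp_neg_mul_int_sq ht, ← hright, mul_pow, div_pow, ← sqrt_eq_rpow,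
    sq_sqrt ht.le]
  field_simp

lemma tendsto_tsum_mul_exp_atTop {c : ℤ → ℝ} {C : ℝ} (hc : ∀ n, |c n| ≤ C) :
    Tendsto (fun t => ∑' n : ℤ, c n * exp (-π * n ^ 2 * t)) atTop (𝓝 (c 0)) := by
  rw [← tsum_ite_eq (0 : ℤ) (fun _ => c 0)]
  refine tendsto_tsum_of_dominated_convergence ((summable_theta one_pos).mul_left C)
    (fun n => ?_) ?_
  · by_cases hn : n = 0
    · simp [hn]
    · have hexp : Tendsto (fun t : ℝ => exp (-(π * n ^ 2 * t))) atTop (𝓝 0) :=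
        tendsto_exp_neg_atTop_nhds_zero.comp (tendsto_id.const_mul_atTop (by positivity))
      simpa only [hn, if_false, mul_zero, neg_mul] using hexp.const_mul (c n)
  · filter_upwards [eventually_ge_atTop 1] with t ht n
    rw [norm_mul, norm_eq_abs, norm_eq_abs, abs_exp]
    have hπ : 0 ≤ π * (n : ℝ) ^ 2 := by positivity
    exact mul_le_mul (hc n) (exp_le_exp.2 (by nlinarith)) (exp_pos _).le
      ((abs_nonneg _).trans (hc n))

lemma tendsto_theta_atTop : Tendsto theta atTop (𝓝 1) := by
  have h := tendsto_tsum_mul_exp_atTop (c := fun _ => 1) (C := 1) (by simp)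
  simp only [one_mul] at h
  exact h

lemma tendsto_thetaAlt_atTop : Tendsto thetaAlt atTop (𝓝 1) :=
  tendsto_tsum_mul_exp_atTop (c := fun n => (-1) ^ n) (C := 1) (by simp [abs_zpow])

lemma tendsto_two_pow_mul_atTop {t : ℝ} (ht : 0 < t) :
    Tendsto (fun n : ℕ => 2 ^ n * t) atTop atTop :=
  (tendsto_pow_atTop_atTop_of_one_lt one_lt_two).atTop_mul_const ht

lemma eq_of_tendsto_atTop_of_two_mul {X : Type*} [TopologicalSpace X] [T2Space X] {f : ℝ → X}
    {x : X} (hlim : Tendsto f atTop (𝓝 x)) (hf : ∀ t, 0 < t → f t = f (2 * t)) {t : ℝ}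
    (ht : 0 < t) : f t = x := by
  have hiter (n : ℕ) : f t = f (2 ^ n * t) := by
    induction n with
    | zero => simp
    | succ n ih => rw [ih, hf _ (by positivity), pow_succ', mul_assoc]
  exact tendsto_nhds_unique (tendsto_const_nhds.congr hiter)
    (hlim.comp (tendsto_two_pow_mul_atTop ht))

lemma thetaAlt_pos {t : ℝ} (ht : 0 < t) : 0 < thetaAlt t := by
  have hmul : ∀ s, 0 < s → theta s * thetaAlt s = thetaAlt (2 * s) ^ 2 :=
    fun s hs => theta_mul_thetaAlt hs
  have hnonneg : 0 ≤ thetaAlt t :=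
    nonneg_of_mul_nonneg_right (hmul t ht ▸ sq_nonneg _) (theta_pos ht)
  refine hnonneg.lt_of_ne' fun hzero => ?_
  have hiff : ∀ s, 0 < s → (thetaAlt s = 0 ↔ thetaAlt (2 * s) = 0) := fun s hs => by
    rw [← sq_eq_zero_iff (a := thetaAlt (2 * s)), ← hmul s hs, mul_eq_zero,
      or_iff_right (theta_pos hs).ne']
  have hiter (n : ℕ) : thetaAlt (2 ^ n * t) = 0 := by
    induction n with
    | zero => simpa using hzero
    | succ n ih => rwa [pow_succ', mul_assoc, ← hiff _ (by positivity)]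
  have hlim := tendsto_thetaAlt_atTop.comp (tendsto_two_pow_mul_atTop ht)
  exact one_ne_zero (tendsto_nhds_unique hlim (tendsto_const_nhds.congr fun n => (hiter n).symm))

lemma thetaAlt_lt_theta {t : ℝ} (ht : 0 < t) : thetaAlt t < theta t := by
  refine (summable_norm_thetaAlt ht).of_norm.tsum_lt_tsum (i := 1) (fun n => ?_) ?_
    (summable_theta ht)
  · exact (le_abs_self _).trans (norm_neg_one_zpow_mul_exp n _).le
  · rw [zpow_one]
    linarith [exp_pos (-π * (1 : ℤ) ^ 2 * t)]

/-! ### Jacobi's inversion of the period ratio -/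

/-- The modulus `k = θ₄² / θ₃²` whose period ratio `K / K'` is `t`. -/
noncomputable def thetaModulus (t : ℝ) : ℝ := thetaAlt t ^ 2 / theta t ^ 2

lemma thetaModulus_mem {t : ℝ} (ht : 0 < t) : thetaModulus t ∈ Ioo (0 : ℝ) 1 := by
  have hα := thetaAlt_pos ht
  have hθ := theta_pos ht
  refine ⟨by rw [thetaModulus]; positivity, ?_⟩
  rw [thetaModulus, div_lt_one (by positivity)]
  exact pow_lt_pow_left₀ (thetaAlt_lt_theta ht) hα.le two_ne_zero

lemma tendsto_thetaModulus_atTop : Tendsto thetaModulus atTop (𝓝 1) := by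
  have h := (tendsto_thetaAlt_atTop.pow 2).div (tendsto_theta_atTop.pow 2) (by norm_num)
  rw [one_pow, div_one] at h
  exact h

-- Doubling `t` performs one step of the arithmetic-geometric mean on `(θ₃², θ₄²)`.
lemma EllK'_thetaModulus_two_mul {t : ℝ} (ht : 0 < t) :
    (theta t ^ 2)⁻¹ * EllK' (thetaModulus t) =
      (theta (2 * t) ^ 2)⁻¹ * EllK' (thetaModulus (2 * t)) := by
  have hα := thetaAlt_pos ht
  have hθ := theta_pos ht
  rw [thetaModulus, EllK'_arith_geom_mean (by positivity)
    (pow_le_pow_left₀ hα.le (thetaAlt_lt_theta ht).le 2), theta_sq_add_thetaAlt_sq ht, ← mul_pow,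
    sqrt_sq (by positivity), theta_mul_thetaAlt ht, mul_div_cancel_left₀ _ two_ne_zero,
    thetaModulus]

lemma EllK'_thetaModulus {t : ℝ} (ht : 0 < t) :
    EllK' (thetaModulus t) = π / 2 * theta t ^ 2 := by
  have hlim : Tendsto (fun t => (theta t ^ 2)⁻¹ * EllK' (thetaModulus t)) atTop (𝓝 (π / 2)) := by
    simpa using ((tendsto_theta_atTop.pow 2).inv₀ (by norm_num)).mul
      (tendsto_EllK'_one.comp tendsto_thetaModulus_atTop)
  have hθ := theta_pos ht
  rw [← eq_of_tendsto_atTop_of_two_mul hlim (fun s hs => EllK'_thetaModulus_two_mul hs) ht]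
  field_simp

lemma one_sub_thetaModulus_sq {t : ℝ} (ht : 0 < t) :
    1 - thetaModulus t ^ 2 = thetaModulus (1 / t) ^ 2 := by
  have hhalf : 0 < t / 2 := by positivity
  have hθ := theta_pos ht
  have hadd := theta_sq_add_thetaAlt_sq hhalf
  have hmul := theta_mul_thetaAlt hhalf
  have hadd_inv := theta_sq_add_thetaAlt_sq (one_div_pos.2 ht)
  have hinv_half := theta_one_div_sq hhalf
  rw [mul_div_cancel₀ t two_ne_zero] at hadd hmul
  rw [show 1 / (t / 2) = 2 * (1 / t) by field_simp] at hinv_half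
  rw [theta_one_div_sq ht, hinv_half] at hadd_inv
  have hα_half : thetaAlt (t / 2) ^ 2 = 2 * theta t ^ 2 - theta (t / 2) ^ 2 := by linarith
  have hα_inv : thetaAlt (1 / t) ^ 2 = t * theta (t / 2) ^ 2 - t * theta t ^ 2 := by linarith
  rw [thetaModulus, thetaModulus, ← hmul, theta_one_div_sq ht, hα_inv, div_pow, mul_pow, hα_half]
  field_simp
  ring

lemma EllK_thetaModulus {t : ℝ} (ht : 0 < t) :
    EllK (thetaModulus t) = π / 2 * (t * theta t ^ 2) := by
  have ht' := one_div_pos.2 ht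
  rw [← theta_one_div_sq ht, ← EllK'_thetaModulus ht', EllK', ← one_sub_thetaModulus_sq ht,
    sub_sub_cancel, sqrt_sq (thetaModulus_mem ht).1.le]

lemma periodRatio_thetaModulus {t : ℝ} (ht : 0 < t) : periodRatio (thetaModulus t) = t := by
  have hθ := theta_pos ht
  rw [periodRatio, EllK_thetaModulus ht, EllK'_thetaModulus ht]
  field_simp

lemma image_periodRatio : periodRatio '' Ioo 0 1 = Ioi 0 :=
  Subset.antisymm (image_subset_iff.2 fun _ hk => periodRatio_pos hk) fun _ ht =>
    ⟨_, thetaModulus_mem ht, periodRatio_thetaModulus ht⟩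

lemma theta_periodRatio_sq {k : ℝ} (hk : k ∈ Ioo (0 : ℝ) 1) :
    theta (periodRatio k) ^ 2 = 2 / π * EllK' k := by
  have ht := periodRatio_pos hk
  have hmodulus : thetaModulus (periodRatio k) = k :=
    strictMonoOn_periodRatio.injOn (thetaModulus_mem ht) hk (periodRatio_thetaModulus ht)
  have h := EllK'_thetaModulus ht
  rw [hmodulus] at h
  rw [h]
  field_simp

/-- The moment `∑ nʲ exp (-π n² t)` of the theta series; the derivatives of `theta` are
proportional to the moments of even order. -/
noncomputable def thetaMoment (j : ℕ) (t : ℝ) : ℝ := ∑' n : ℤ, (n : ℝ) ^ j * exp (-π * n ^ 2 * t)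

lemma thetaMoment_zero : thetaMoment 0 = theta := by
  ext t
  simp only [thetaMoment, theta, pow_zero, one_mul]

lemma summable_norm_thetaMoment (j : ℕ) {t : ℝ} (ht : 0 < t) :
    Summable fun n : ℤ => ‖(n : ℝ) ^ j * exp (-π * n ^ 2 * t)‖ := by
  simpa only [norm_mul, norm_pow, norm_eq_abs, abs_exp] using summable_abs_pow_mul_exp j ht

lemma hasDerivAt_thetaMoment (j : ℕ) {t : ℝ} (ht : 0 < t) :
    HasDerivAt (thetaMoment j) (-π * thetaMoment (j + 2) t) t := by
  have h := hasDerivAt_tsum_of_isPreconnected (t := Ioi (t / 2)) (y₀ := t) (y := t)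
    (g := fun (n : ℤ) (s : ℝ) => (n : ℝ) ^ j * exp (-π * n ^ 2 * s))
    (g' := fun (n : ℤ) (s : ℝ) => (n : ℝ) ^ j * (exp (-π * n ^ 2 * s) * (-π * n ^ 2)))
    ((summable_abs_pow_mul_exp (j + 2) (half_pos ht)).mul_left π) isOpen_Ioi
    (convex_Ioi _).isPreconnected (fun n s _ => ?_) (fun n s hs => ?_) (half_lt_self ht)
    (summable_norm_thetaMoment j ht).of_norm (half_lt_self ht)
  · refine h.congr_deriv ?_
    rw [thetaMoment, ← tsum_mul_left]
    exact tsum_congr fun n => by ring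
  · exact ((hasDerivAt_const_mul (-π * (n : ℝ) ^ 2)).exp).const_mul _
  · have hexp : exp (-π * n ^ 2 * s) ≤ exp (-π * n ^ 2 * (t / 2)) := by
      have hπ : 0 ≤ π * (n : ℝ) ^ 2 := by positivity
      exact exp_le_exp.2 (by nlinarith [mem_Ioi.1 hs])
    calc ‖(n : ℝ) ^ j * (exp (-π * n ^ 2 * s) * (-π * n ^ 2))‖
        = π * (|(n : ℝ)| ^ (j + 2) * exp (-π * n ^ 2 * s)) := by
          simp only [norm_mul, norm_pow, norm_neg, norm_eq_abs, abs_exp, abs_of_pos pi_pos]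
          ring
      _ ≤ π * (|(n : ℝ)| ^ (j + 2) * exp (-π * n ^ 2 * (t / 2))) := by gcongr

lemma hasDerivAt_theta {t : ℝ} (ht : 0 < t) :
    HasDerivAt theta (-π * thetaMoment 2 t) t :=
  thetaMoment_zero ▸ hasDerivAt_thetaMoment 0 ht

lemma theta_mul_thetaMoment_two_periodRatio {k : ℝ} (hk : k ∈ Ioo (0 : ℝ) 1) :
    theta (periodRatio k) * thetaMoment 2 (periodRatio k) =
      2 / π ^ 3 * (EllK' k ^ 2 * (EllE' k - k ^ 2 * EllK' k)) := by
  have hθ := (hasDerivAt_theta (periodRatio_pos hk)).comp k (hasDerivAt_periodRatio hk)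
  have hjacobi : (fun k => 2 / π * EllK' k) =ᶠ[𝓝 k] (theta ∘ periodRatio) ^ 2 := by
    filter_upwards [isOpen_Ioo.mem_nhds hk] with x hx
    exact (theta_periodRatio_sq hx).symm
  have h := (hθ.pow 2).unique
    (((hasDerivAt_EllK' hk).const_mul (2 / π)).congr_of_eventuallyEq hjacobi.symm)
  have hk0 := hk.1
  have hk2 := one_sub_sq_pos hk
  have hK' := EllK'_pos hk
  simp only [Function.comp_apply, Nat.cast_ofNat, Nat.reduceSub, pow_one] at h
  field_simp at h ⊢
  linear_combination -h

lemma thetaMoment_two_periodRatio_sq {k : ℝ} (hk : k ∈ Ioo (0 : ℝ) 1) :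
    thetaMoment 2 (periodRatio k) ^ 2 =
      2 / π ^ 5 * (EllK' k ^ 3 * (EllE' k - k ^ 2 * EllK' k) ^ 2) := by
  have hK' := EllK'_pos hk
  have h := congrArg (· ^ 2) (theta_mul_thetaMoment_two_periodRatio hk)
  simp only [mul_pow, theta_periodRatio_sq hk] at h
  field_simp at h ⊢
  linear_combination h

lemma thetaMoment_two_sq_add_theta_mul_thetaMoment_four {k : ℝ} (hk : k ∈ Ioo (0 : ℝ) 1) :
    thetaMoment 2 (periodRatio k) ^ 2 + theta (periodRatio k) * thetaMoment 4 (periodRatio k) =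
      4 / π ^ 5 * (EllK' k ^ 3 *
        (2 * (EllE' k - k ^ 2 * EllK' k) ^ 2 + k ^ 2 * (1 - k ^ 2) * EllK' k ^ 2)) := by
  have hτ := hasDerivAt_periodRatio hk
  have hθ := (hasDerivAt_theta (periodRatio_pos hk)).comp k hτ
  have hθ₂ := (hasDerivAt_thetaMoment 2 (periodRatio_pos hk)).comp k hτ
  have hK := hasDerivAt_EllK' hk
  have hright := ((hK.pow 2).mul ((hasDerivAt_EllE' hk).sub
    ((hasDerivAt_pow 2 k).mul hK))).const_mul (2 / π ^ 3)
  have hfun := hright.congr_of_eventuallyEq (f₁ := (theta ∘ periodRatio) *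
      (thetaMoment 2 ∘ periodRatio)) <| by
    filter_upwards [isOpen_Ioo.mem_nhds hk] with x hx
    exact theta_mul_thetaMoment_two_periodRatio hx
  have h := (hθ.mul hθ₂).unique hfun
  have hk0 := hk.1
  have hk2 := one_sub_sq_pos hk
  have hK' := EllK'_pos hk
  simp only [Function.comp_apply, Pi.pow_apply, Pi.mul_apply, Pi.sub_apply, Nat.cast_ofNat,
    Nat.reduceSub, Nat.reduceAdd, pow_one] at h
  field_simp at h ⊢
  linear_combination -h

/-- The combination `θ θ'' - 3 θ'²` of derivatives of `theta`, written with its moments. -/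
noncomputable def thetaBracket (t : ℝ) : ℝ :=
  π ^ 2 * (theta t * thetaMoment 4 t - 3 * thetaMoment 2 t ^ 2)

lemma thetaBracket_periodRatio {k : ℝ} (hk : k ∈ Ioo (0 : ℝ) 1) :
    thetaBracket (periodRatio k) = 4 / π ^ 3 * (k ^ 2 * (1 - k ^ 2) * EllK' k ^ 5) := by
  have hsq := thetaMoment_two_periodRatio_sq hk
  have hadd := thetaMoment_two_sq_add_theta_mul_thetaMoment_four hk
  rw [thetaBracket]
  field_simp at hsq hadd ⊢
  linear_combination hadd - 4 * hsq

lemma integral_mul_EllK_cube_eq_integral_thetaBracket :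
    ∫ k in (0 : ℝ)..1, k * EllK k ^ 3 =
      π ^ 2 / 2 * ∫ t in Ioi 0, t ^ 3 * thetaBracket t := by
  rw [intervalIntegral.integral_of_le zero_le_one, integral_Ioc_eq_integral_Ioo,
    ← image_periodRatio, integral_image_eq_integral_deriv_smul_of_monotoneOn measurableSet_Ioo
    (fun k hk => (hasDerivAt_periodRatio hk).hasDerivWithinAt) strictMonoOn_periodRatio.monotoneOn,
    ← integral_const_mul]
  refine setIntegral_congr_fun measurableSet_Ioo fun k hk => ?_
  have hk0 := hk.1
  have hk2 := one_sub_sq_pos hk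
  have hK' := EllK'_pos hk
  rw [thetaBracket_periodRatio hk, smul_eq_mul, periodRatio]
  field_simp
  norm_num

/-! ### Eisenstein series of the Gaussian lattice -/

lemma hasSum_lattice_iff (L : PeriodPair) {f : ℂ → ℂ} {a : ℂ} :
    HasSum (fun l : L.lattice => f l) a ↔
      HasSum (fun p : ℤ × ℤ => f (p.1 * L.ω₁ + p.2 * L.ω₂)) a := by
  rw [← L.latticeEquivProd.symm.toEquiv.hasSum_iff]
  simp only [Function.comp_def, LinearEquiv.coe_toEquiv, PeriodPair.latticeEquiv_symm_apply]

lemma hasSum_eisensteinSeries (L : PeriodPair) {r : ℕ} (hr : 2 < r) :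
    HasSum (fun p : ℤ × ℤ => ((p.1 * L.ω₁ + p.2 * L.ω₂) ^ r)⁻¹) (L.G r) := by
  have h := L.hasSum_sumInvPow 0 hr
  simp only [sub_zero, PeriodPair.sumInvPow_zero] at h
  exact (hasSum_lattice_iff L (f := fun z => (z ^ r)⁻¹)).1 h

/-- The periods `1, i` of the lattice `ℤ[i]` of Gaussian integers. -/
noncomputable def gaussianPeriods : PeriodPair where
  ω₁ := 1
  ω₂ := Complex.I
  indep := by
    rw [LinearIndependent.pair_iff]
    intro s t h
    simpa [Complex.ext_iff] using h

lemma hasSum_gaussian_eisensteinSeries {r : ℕ} (hr : 2 < r) :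
    HasSum (fun p : ℤ × ℤ => ((p.1 + p.2 * Complex.I : ℂ) ^ r)⁻¹) (gaussianPeriods.G r) := by
  simpa only [gaussianPeriods, mul_one] using hasSum_eisensteinSeries gaussianPeriods hr

lemma summable_inv_sq_add_sq_sq :
    Summable fun p : ℤ × ℤ => (((p.1 : ℝ) ^ 2 + (p.2 : ℝ) ^ 2) ^ 2)⁻¹ := by
  refine (hasSum_gaussian_eisensteinSeries (r := 4) (by norm_num)).summable.norm.congr fun p => ?_
  have hnorm : ‖(p.1 + p.2 * Complex.I : ℂ)‖ ^ 2 = (p.1 : ℝ) ^ 2 + (p.2 : ℝ) ^ 2 := by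
    rw [Complex.sq_norm]
    exact_mod_cast Complex.normSq_add_mul_I p.1 p.2
  rw [norm_inv, norm_pow, ← hnorm, ← pow_mul]

lemma inv_pow_four_add_inv_pow_four_swap (a b : ℝ) :
    ((a + b * Complex.I : ℂ) ^ 4)⁻¹ + ((b + a * Complex.I : ℂ) ^ 4)⁻¹ =
      2 * (a ^ 4 - 6 * a ^ 2 * b ^ 2 + b ^ 4) / (a ^ 2 + b ^ 2) ^ 4 := by
  have hmul : (a + b * Complex.I) * (b + a * Complex.I) = (a ^ 2 + b ^ 2) * Complex.I := by
    linear_combination (a * b : ℂ) * Complex.I_sq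
  have hpow : (a + b * Complex.I) ^ 4 * (b + a * Complex.I) ^ 4 = ((a ^ 2 + b ^ 2) ^ 4 : ℂ) := by
    rw [← mul_pow, hmul, mul_pow, Complex.I_pow_four, mul_one]
  have hadd : (a + b * Complex.I) ^ 4 + (b + a * Complex.I) ^ 4 =
      (2 * (a ^ 4 - 6 * a ^ 2 * b ^ 2 + b ^ 4) : ℂ) := by
    linear_combination ((a ^ 4 + b ^ 4) * (Complex.I ^ 2 - 1) + 12 * a ^ 2 * b ^ 2 +
      4 * a * b * (a ^ 2 + b ^ 2) * Complex.I : ℂ) * Complex.I_sq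
  rcases eq_or_ne ((a ^ 2 + b ^ 2 : ℂ) ^ 4) 0 with h | h
  · have hreal : a ^ 2 + b ^ 2 = 0 := by exact_mod_cast (pow_eq_zero_iff four_ne_zero).1 h
    have ha : a = 0 := by nlinarith [sq_nonneg a, sq_nonneg b]
    have hb : b = 0 := by nlinarith [sq_nonneg a, sq_nonneg b]
    simp [ha, hb]
  · rw [← hpow] at h ⊢
    rw [inv_add_inv (left_ne_zero_of_mul h) (right_ne_zero_of_mul h), hadd]

lemma hasSum_thetaMoment_mul_thetaMoment (i j : ℕ) {t : ℝ} (ht : 0 < t) :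
    HasSum (fun p : ℤ × ℤ => (p.1 : ℝ) ^ i * (p.2 : ℝ) ^ j *
      exp (-π * ((p.1 : ℝ) ^ 2 + (p.2 : ℝ) ^ 2) * t)) (thetaMoment i t * thetaMoment j t) := by
  have hi := summable_norm_thetaMoment i ht
  have hj := summable_norm_thetaMoment j ht
  refine (hi.of_norm.hasSum.mul hj.of_norm.hasSum
    (summable_mul_of_summable_norm hi hj)).congr_fun fun p => ?_
  rw [mul_add, add_mul, exp_add]
  ring

lemma hasSum_thetaBracket {t : ℝ} (ht : 0 < t) :
    HasSum (fun p : ℤ × ℤ => π ^ 2 * ((p.1 : ℝ) ^ 4 - 3 * (p.1 : ℝ) ^ 2 * (p.2 : ℝ) ^ 2) *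
      exp (-π * ((p.1 : ℝ) ^ 2 + (p.2 : ℝ) ^ 2) * t)) (thetaBracket t) := by
  rw [thetaBracket, ← thetaMoment_zero, mul_comm (thetaMoment 0 t), sq (thetaMoment 2 t)]
  refine (((hasSum_thetaMoment_mul_thetaMoment 4 0 ht).sub
    ((hasSum_thetaMoment_mul_thetaMoment 2 2 ht).mul_left 3)).mul_left (π ^ 2)).congr_fun
    fun p => ?_
  ring

lemma abs_pow_four_sub_le (a b : ℝ) : |a ^ 4 - 3 * a ^ 2 * b ^ 2| ≤ 3 * (a ^ 2 + b ^ 2) ^ 2 := by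
  rw [abs_le]
  constructor <;> nlinarith [sq_nonneg (a ^ 2), sq_nonneg (b ^ 2), sq_nonneg (a * b)]

lemma hasSum_mellin_thetaBracket :
    HasSum (fun p : ℤ × ℤ => (6 / π ^ 2 : ℂ) * ((p.1 : ℂ) ^ 4 - 3 * (p.1 : ℂ) ^ 2 * (p.2 : ℂ) ^ 2) /
      ((p.1 : ℂ) ^ 2 + (p.2 : ℂ) ^ 2) ^ 4) (mellin (fun t => (thetaBracket t : ℂ)) 4) := by
  refine (hasSum_mellin_pi_mul (s := 4)
    (a := fun p : ℤ × ℤ =>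
      ((π ^ 2 * ((p.1 : ℝ) ^ 4 - 3 * (p.1 : ℝ) ^ 2 * (p.2 : ℝ) ^ 2) : ℝ) : ℂ))
    (q := fun p : ℤ × ℤ => (p.1 : ℝ) ^ 2 + (p.2 : ℝ) ^ 2) (fun p => ?_) (by norm_num)
    (fun t ht => ?_) ?_).congr_fun fun p => ?_
  · rcases eq_or_ne (p.1 : ℝ) 0 with h | h
    · simp [h]
    · exact Or.inr (by positivity)
  · exact_mod_cast Complex.hasSum_ofReal.2 (hasSum_thetaBracket ht)
  · refine .of_nonneg_of_le (fun p => by positivity) (fun p => ?_)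
      (summable_inv_sq_add_sq_sq.mul_left (3 * π ^ 2))
    rw [Complex.norm_real, norm_mul, norm_eq_abs, norm_eq_abs, abs_of_pos (by positivity),
      Complex.re_ofNat, rpow_ofNat]
    calc π ^ 2 * |(p.1 : ℝ) ^ 4 - 3 * (p.1 : ℝ) ^ 2 * (p.2 : ℝ) ^ 2| /
          ((p.1 : ℝ) ^ 2 + (p.2 : ℝ) ^ 2) ^ 4
        ≤ π ^ 2 * (3 * ((p.1 : ℝ) ^ 2 + (p.2 : ℝ) ^ 2) ^ 2) /
          ((p.1 : ℝ) ^ 2 + (p.2 : ℝ) ^ 2) ^ 4 := by gcongr; exact abs_pow_four_sub_le _ _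
      _ = 3 * π ^ 2 * (((p.1 : ℝ) ^ 2 + (p.2 : ℝ) ^ 2) ^ 2)⁻¹ := by
        rcases eq_or_ne ((p.1 : ℝ) ^ 2 + (p.2 : ℝ) ^ 2) 0 with h | h
        · simp [h]
        · field_simp
  · have hπ : (π : ℂ) ≠ 0 := by exact_mod_cast pi_ne_zero
    have hΓ : Complex.Gamma 4 = 6 := (Complex.Gamma_ofNat_eq_factorial 3).trans (by norm_num)
    rw [hΓ, Complex.cpow_neg, Complex.cpow_ofNat, Complex.cpow_ofNat]
    push_cast
    field_simp

theorem integral_cube_mul_thetaBracket :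
    ((∫ t in Ioi (0 : ℝ), t ^ 3 * thetaBracket t : ℝ) : ℂ) = 3 / π ^ 2 * gaussianPeriods.G 4 := by
  have hmellin : mellin (fun t => (thetaBracket t : ℂ)) 4 =
      ((∫ t in Ioi (0 : ℝ), t ^ 3 * thetaBracket t : ℝ) : ℂ) := by
    rw [← integral_complex_ofReal, mellin]
    refine setIntegral_congr_fun measurableSet_Ioi fun t _ => ?_
    rw [show (4 : ℂ) - 1 = 3 by norm_num, Complex.cpow_ofNat, smul_eq_mul]
    push_cast
    rfl
  have hG := hasSum_gaussian_eisensteinSeries (r := 4) (by norm_num)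
  have hM := hasSum_mellin_thetaBracket
  have hswap {f : ℤ × ℤ → ℂ} {s : ℂ} (h : HasSum f s) : HasSum (fun p => f p + f p.swap) (s + s) :=
    h.add ((Equiv.prodComm ℤ ℤ).hasSum_iff.2 h)
  have h := (hswap hM).unique (((hswap hG).mul_left (3 / π ^ 2 : ℂ)).congr_fun fun p => ?_)
  · rw [← hmellin]
    linear_combination h / 2
  · have := inv_pow_four_add_inv_pow_four_swap p.1 p.2
    push_cast at this
    simp only [Prod.fst_swap, Prod.snd_swap, this, add_comm ((p.2 : ℂ) ^ 2)]
    ring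

theorem integral_mul_EllK_cube_eq_eisensteinSeries :
    ((∫ k in (0 : ℝ)..1, k * EllK k ^ 3 : ℝ) : ℂ) = 3 / 2 * gaussianPeriods.G 4 := by
  have hπ : (π : ℂ) ≠ 0 := by exact_mod_cast pi_ne_zero
  rw [integral_mul_EllK_cube_eq_integral_thetaBracket, Complex.ofReal_mul,
    integral_cube_mul_thetaBracket]
  push_cast
  field_simp

/-! ### Weierstrass functions -/

lemma hasDerivAt_weierstrassP (L : PeriodPair) {z : ℂ} (hz : z ∉ L.lattice) :
    HasDerivAt L.weierstrassP (L.derivWeierstrassP z) z := by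
  rw [← L.deriv_weierstrassP]
  exact (L.analyticOnNhd_weierstrassP z hz).differentiableAt.hasDerivAt

lemma derivWeierstrassP_div_two (L : PeriodPair) {l : ℂ} (hl : l ∈ L.lattice) :
    L.derivWeierstrassP (l / 2) = 0 := by
  have h := L.derivWeierstrassP_sub_coe (l / 2) ⟨l, hl⟩
  rw [show l / 2 - l = -(l / 2) by ring, L.derivWeierstrassP_neg] at h
  exact self_eq_neg.1 h.symm

lemma isConnected_compl_lattice (L : PeriodPair) : IsConnected (L.lattice : Set ℂ)ᶜ :=
  (countable_of_Lindelof_of_discrete (X := L.lattice)).to_set.isConnected_compl_of_one_lt_rank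
    (by simp)

lemma exists_derivWeierstrassP_ne_zero (L : PeriodPair) :
    ∃ z ∉ L.lattice, L.derivWeierstrassP z ≠ 0 := by
  by_contra! hzero
  have hopen : IsOpen (L.lattice : Set ℂ)ᶜ := L.isClosed_lattice.isOpen_compl
  obtain ⟨c, hc⟩ := hopen.exists_is_const_of_deriv_eq_zero
    (isConnected_compl_lattice L).isPreconnected
    (fun z hz => (hasDerivAt_weierstrassP L hz).differentiableAt.differentiableWithinAt)
    fun z hz => (hasDerivAt_weierstrassP L hz).deriv.trans (hzero z hz)
  have hpole : Tendsto L.weierstrassP (𝓝[≠] 0) (Bornology.cobounded ℂ) := by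
    refine tendsto_cobounded_of_meromorphicOrderAt_neg ?_
    rw [L.order_weierstrassP 0 L.lattice.zero_mem]
    decide
  have hnear : ∀ᶠ z in 𝓝[≠] (0 : ℂ), L.weierstrassP z = c := by
    filter_upwards [nhdsWithin_le_nhds (L.compl_lattice_sdiff_singleton_mem_nhds 0),
      self_mem_nhdsWithin] with z hz hz0
    exact hc z fun hmem => hz ⟨hmem, hz0⟩
  exact not_tendsto_const_atTop _ _ <|
    (tendsto_norm_cobounded_atTop.comp hpole).congr' (hnear.mono fun z hz => congrArg norm hz)

lemma hasDerivAt_derivWeierstrassP (L : PeriodPair) {z : ℂ} (hz : z ∉ L.lattice) :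
    HasDerivAt L.derivWeierstrassP (6 * L.weierstrassP z ^ 2 - L.g₂ / 2) z := by
  have hopen : IsOpen (L.lattice : Set ℂ)ᶜ := L.isClosed_lattice.isOpen_compl
  have hP' := L.analyticOnNhd_derivWeierstrassP
  have hmul : ∀ w ∈ (L.lattice : Set ℂ)ᶜ, L.derivWeierstrassP w *
      (deriv L.derivWeierstrassP w - (6 * L.weierstrassP w ^ 2 - L.g₂ / 2)) = 0 := by
    intro w hw
    have hdP := hasDerivAt_weierstrassP L hw
    have hcubic := (((hdP.pow 3).const_mul 4).sub (hdP.const_mul L.g₂)).sub_const L.g₃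
    have h := ((hP' w hw).differentiableAt.hasDerivAt.pow 2).unique
      (hcubic.congr_of_eventuallyEq ?_)
    · simp only [Nat.cast_ofNat, Nat.add_one_sub_one, pow_one] at h
      linear_combination h / 2
    · filter_upwards [hopen.mem_nhds hw] with v hv
      exact L.derivWeierstrassP_sq v hv
  have hzero := (AnalyticOnNhd.eq_zero_or_eq_zero_of_mul_eq_zero hP'
    (hP'.deriv.sub ((analyticOnNhd_const.mul (L.analyticOnNhd_weierstrassP.pow 2)).sub
      analyticOnNhd_const)) hmul (isConnected_compl_lattice L).isPreconnected).resolve_left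
    fun h => by
      obtain ⟨w, hw, hne⟩ := exists_derivWeierstrassP_ne_zero L
      exact hne (h w hw)
  exact (hP' z hz).differentiableAt.hasDerivAt.congr_deriv (sub_eq_zero.1 (hzero z hz))

lemma G_eq_pow_mul_G (L : PeriodPair) {c : ℂ} (hc : c ≠ 0)
    (hL : ∀ l, c * l ∈ L.lattice ↔ l ∈ L.lattice) (r : ℕ) : L.G r = c ^ r * L.G r := by
  have hmul : ∑' l : L.lattice, ((c * l) ^ r)⁻¹ = L.G r :=
    ((Equiv.mulLeft₀ c hc).subtypeEquiv fun l => (hL l).symm).tsum_eq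
      fun l : L.lattice => ((l : ℂ) ^ r)⁻¹
  simp only [mul_pow, mul_inv, tsum_mul_left] at hmul
  exact (inv_mul_eq_iff_eq_mul₀ (pow_ne_zero r hc)).1 hmul

lemma tsum_lattice_conj (L : PeriodPair) (hL : ∀ l ∈ L.lattice, conj l ∈ L.lattice) (f : ℂ → ℂ) :
    ∑' l : L.lattice, f (conj (l : ℂ)) = ∑' l : L.lattice, f l :=
  (Function.Involutive.toPerm (fun l : L.lattice => ⟨conj (l : ℂ), hL l l.2⟩)
    fun _ => Subtype.ext (Complex.conj_conj _)).tsum_eq fun l : L.lattice => f l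

lemma weierstrassP_conj (L : PeriodPair) (hL : ∀ l ∈ L.lattice, conj l ∈ L.lattice) (z : ℂ) :
    L.weierstrassP (conj z) = conj (L.weierstrassP z) := by
  rw [PeriodPair.weierstrassP, PeriodPair.weierstrassP, Complex.conj_tsum,
    ← tsum_lattice_conj L hL fun l => 1 / (conj z - l) ^ 2 - 1 / l ^ 2]
  simp only [map_sub, map_div₀, map_pow, map_one]

lemma derivWeierstrassP_conj (L : PeriodPair) (hL : ∀ l ∈ L.lattice, conj l ∈ L.lattice) (z : ℂ) :
    L.derivWeierstrassP (conj z) = conj (L.derivWeierstrassP z) := by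
  rw [PeriodPair.derivWeierstrassP, PeriodPair.derivWeierstrassP, map_neg, Complex.conj_tsum,
    ← tsum_lattice_conj L hL fun l => 2 / (conj z - l) ^ 3]
  simp only [map_sub, map_div₀, map_pow, map_ofNat]

/-! ### The real Weierstrass function of the Gaussian lattice -/

lemma mem_gaussian_lattice {z : ℂ} :
    z ∈ gaussianPeriods.lattice ↔ ∃ m n : ℤ, m + n * Complex.I = z := by
  simp only [PeriodPair.mem_lattice, gaussianPeriods, mul_one]

lemma notMem_gaussian_lattice {x : ℝ} (hx : x ∈ Ioo (0 : ℝ) 1) :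
    (x : ℂ) ∉ gaussianPeriods.lattice := by
  intro h
  obtain ⟨m, n, hmn⟩ := mem_gaussian_lattice.1 h
  obtain rfl : (m : ℝ) = x := by simpa using congrArg Complex.re hmn
  have h0 : 0 < m := by exact_mod_cast hx.1
  have h1 : m < 1 := by exact_mod_cast hx.2
  omega

lemma conj_mem_gaussian_lattice : ∀ l ∈ gaussianPeriods.lattice,
    conj l ∈ gaussianPeriods.lattice := by
  intro l hl
  obtain ⟨m, n, rfl⟩ := mem_gaussian_lattice.1 hl
  exact mem_gaussian_lattice.2 ⟨m, -n, by simp⟩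

lemma I_mul_mem_gaussian_lattice (l : ℂ) :
    Complex.I * l ∈ gaussianPeriods.lattice ↔ l ∈ gaussianPeriods.lattice := by
  simp only [mem_gaussian_lattice]
  constructor
  · rintro ⟨m, n, h⟩
    refine ⟨n, -m, mul_left_cancel₀ Complex.I_ne_zero ?_⟩
    push_cast
    linear_combination h - m * Complex.I_sq
  · rintro ⟨m, n, rfl⟩
    refine ⟨-n, m, ?_⟩
    push_cast
    linear_combination -(n : ℂ) * Complex.I_sq

lemma gaussian_g₃_eq_zero : gaussianPeriods.g₃ = 0 := by
  have h := G_eq_pow_mul_G gaussianPeriods Complex.I_ne_zero I_mul_mem_gaussian_lattice 6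
  rw [show 6 = 4 + 2 by rfl, pow_add, Complex.I_pow_four, Complex.I_sq, one_mul, neg_one_mul] at h
  rw [PeriodPair.g₃, self_eq_neg.1 h, mul_zero]

/-- The restriction of the Weierstrass function `℘` of `ℤ[i]`, which is real there, to `ℝ`. -/
noncomputable def wp (x : ℝ) : ℝ := (gaussianPeriods.weierstrassP x).re

/-- The restriction of the derivative `℘'` of the Weierstrass function of `ℤ[i]` to `ℝ`. -/
noncomputable def wp' (x : ℝ) : ℝ := (gaussianPeriods.derivWeierstrassP x).re

/-- The real half-period value `e₁` of `wp`, defined as the positive root of `4 e² = g₂`. -/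
noncomputable def wpRoot : ℝ := √(15 * (gaussianPeriods.G 4).re)

lemma ofReal_wp (x : ℝ) : (wp x : ℂ) = gaussianPeriods.weierstrassP x := by
  rw [wp, ← Complex.conj_eq_iff_re, ← weierstrassP_conj _ conj_mem_gaussian_lattice,
    Complex.conj_ofReal]

lemma ofReal_wp' (x : ℝ) : (wp' x : ℂ) = gaussianPeriods.derivWeierstrassP x := by
  rw [wp', ← Complex.conj_eq_iff_re, ← derivWeierstrassP_conj _ conj_mem_gaussian_lattice,
    Complex.conj_ofReal]

lemma two_thirds_mul_integral_mul_EllK_cube :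
    2 / 3 * ∫ k in (0 : ℝ)..1, k * EllK k ^ 3 = (gaussianPeriods.G 4).re := by
  have h := integral_mul_EllK_cube_eq_eisensteinSeries
  rw [← Complex.ofReal_re (2 / 3 * _)]
  congr 1
  push_cast at h ⊢
  linear_combination 2 / 3 * h

lemma ofReal_gaussian_G_four_re : ((gaussianPeriods.G 4).re : ℂ) = gaussianPeriods.G 4 := by
  rw [← two_thirds_mul_integral_mul_EllK_cube]
  have h := integral_mul_EllK_cube_eq_eisensteinSeries
  push_cast at h ⊢
  linear_combination 2 / 3 * h

lemma gaussian_G_four_re_pos : 0 < (gaussianPeriods.G 4).re := by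
  rw [← two_thirds_mul_integral_mul_EllK_cube, integral_mul_EllK_cube_eq_integral_mul_EllK'_cube]
  exact mul_pos (by norm_num) integral_mul_EllK'_cube_pos

lemma wpRoot_pos : 0 < wpRoot := sqrt_pos.2 (mul_pos (by norm_num) gaussian_G_four_re_pos)

lemma wpRoot_sq : wpRoot ^ 2 = 15 * (gaussianPeriods.G 4).re :=
  sq_sqrt (mul_pos (by norm_num) gaussian_G_four_re_pos).le

lemma gaussian_g₂_eq : gaussianPeriods.g₂ = 4 * (wpRoot : ℂ) ^ 2 := by
  rw [PeriodPair.g₂, ← ofReal_gaussian_G_four_re]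
  norm_cast
  rw [wpRoot_sq]
  ring

lemma hasDerivAt_wp {x : ℝ} (hx : x ∈ Ioo (0 : ℝ) 1) : HasDerivAt wp (wp' x) x :=
  (hasDerivAt_weierstrassP gaussianPeriods (notMem_gaussian_lattice hx)).real_of_complex

lemma hasDerivAt_wp' {x : ℝ} (hx : x ∈ Ioo (0 : ℝ) 1) :
    HasDerivAt wp' (6 * wp x ^ 2 - 2 * wpRoot ^ 2) x := by
  refine (hasDerivAt_derivWeierstrassP gaussianPeriods
    (notMem_gaussian_lattice hx)).real_of_complex.congr_deriv ?_
  rw [← ofReal_wp, gaussian_g₂_eq, ← Complex.ofReal_re (6 * wp x ^ 2 - _)]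
  congr 1
  push_cast
  ring

lemma wp'_sq {x : ℝ} (hx : x ∈ Ioo (0 : ℝ) 1) :
    wp' x ^ 2 = 4 * wp x * (wp x ^ 2 - wpRoot ^ 2) := by
  have h := gaussianPeriods.derivWeierstrassP_sq x (notMem_gaussian_lattice hx)
  rw [← ofReal_wp, ← ofReal_wp', gaussian_g₂_eq, gaussian_g₃_eq_zero] at h
  norm_cast at h
  linear_combination h

lemma tendsto_wp_zero : Tendsto wp (𝓝[>] 0) atTop := by
  have hsplit (x : ℝ) : wp x = (gaussianPeriods.weierstrassPExcept 0 x).re + (x ^ 2)⁻¹ := by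
    have h := gaussianPeriods.weierstrassPExcept_def 0 (x : ℂ)
    simp only [ZeroMemClass.coe_zero, sub_zero, zero_pow two_ne_zero, div_zero, zero_sub] at h
    rw [← Complex.ofReal_re (x ^ 2)⁻¹, ← Complex.add_re, wp, h]
    congr 1
    push_cast
    ring
  have hregular : ContinuousAt (fun x : ℝ => (gaussianPeriods.weierstrassPExcept 0 x).re) 0 := by
    have h := (gaussianPeriods.analyticAt_weierstrassPExcept 0).continuousAt
    rw [← Complex.ofReal_zero] at h
    exact Complex.continuous_re.continuousAt.comp
      (h.comp (f := fun x : ℝ => (x : ℂ)) Complex.continuous_ofReal.continuousAt)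
  have hpole : Tendsto (fun x : ℝ => (x ^ 2)⁻¹) (𝓝[>] 0) atTop := by
    simpa only [Function.comp_def, inv_pow] using
      (tendsto_pow_atTop two_ne_zero).comp (tendsto_inv_nhdsGT_zero (𝕜 := ℝ))
  exact ((hregular.tendsto.mono_left nhdsWithin_le_nhds).add_atTop hpole).congr
    fun x => (hsplit x).symm

lemma wpRoot_le_wp {x : ℝ} (hx : x ∈ Ioo (0 : ℝ) 1) : wpRoot ≤ wp x := by
  have hroot := wpRoot_pos
  have hgap {y : ℝ} (hy : y ∈ Ioo (0 : ℝ) 1) (hpos : 0 < wp y) : wpRoot ≤ wp y := by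
    by_contra! hlt
    nlinarith [wp'_sq hy, sq_nonneg (wp' y), mul_pos hpos (sub_pos.2 (pow_lt_pow_left₀ hlt hpos.le
      two_ne_zero))]
  by_contra! hlt
  obtain ⟨y, hy_lt, hy⟩ := ((tendsto_wp_zero.eventually_gt_atTop wpRoot).and
    (Ioo_mem_nhdsGT one_pos)).exists
  have hcont : ContinuousOn wp (Ioo 0 1) := fun z hz =>
    (hasDerivAt_wp hz).continuousAt.continuousWithinAt
  have hx_nonpos : wp x ≤ 0 := not_lt.1 fun hpos => hlt.not_ge (hgap hx hpos)
  obtain ⟨w, hw, hw_eq⟩ := isPreconnected_Ioo.intermediate_value hx hy hcont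
    (show wpRoot / 2 ∈ Icc (wp x) (wp y) from ⟨by linarith, by linarith⟩)
  linarith [hgap hw (by linarith)]

lemma wp'_half : wp' (1 / 2) = 0 := by
  have h := derivWeierstrassP_div_two gaussianPeriods gaussianPeriods.ω₁_mem_lattice
  rw [show gaussianPeriods.ω₁ / 2 = ((1 / 2 : ℝ) : ℂ) by simp [gaussianPeriods], ← ofReal_wp'] at h
  exact_mod_cast h

lemma wp_half : wp (1 / 2) = wpRoot := by
  have hroot := wpRoot_pos
  have hle := wpRoot_le_wp (x := 1 / 2) (by norm_num)
  have h := wp'_sq (x := 1 / 2) (by norm_num)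
  rw [wp'_half] at h
  refine hle.antisymm' (not_lt.1 fun hlt => ?_)
  linarith [mul_pos (hroot.trans hlt)
    (sub_pos.2 (pow_lt_pow_left₀ hlt hroot.le two_ne_zero))]

lemma wp'_neg {x : ℝ} (hx : x ∈ Ioo (0 : ℝ) (1 / 2)) : wp' x < 0 := by
  have hmono : StrictMonoOn wp' (Ioo 0 1) := by
    refine strictMonoOn_of_deriv_pos (convex_Ioo 0 1)
      (fun y hy => (hasDerivAt_wp' hy).continuousAt.continuousWithinAt) fun y hy => ?_
    rw [interior_Ioo] at hy
    rw [(hasDerivAt_wp' hy).deriv]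
    nlinarith [wpRoot_le_wp hy, wpRoot_pos]
  rw [← wp'_half]
  exact hmono ⟨hx.1, by linarith [hx.2]⟩ (by norm_num) hx.2

lemma wpRoot_lt_wp {x : ℝ} (hx : x ∈ Ioo (0 : ℝ) (1 / 2)) : wpRoot < wp x := by
  have hx1 : x ∈ Ioo (0 : ℝ) 1 := ⟨hx.1, by linarith [hx.2]⟩
  refine (wpRoot_le_wp hx1).lt_of_ne fun heq => (wp'_neg hx).ne ?_
  simpa [← heq] using wp'_sq hx1

lemma neg_wp'_eq {x : ℝ} (hx : x ∈ Ioo (0 : ℝ) (1 / 2)) :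
    -wp' x = 2 * (√(wp x) * √(wp x ^ 2 - wpRoot ^ 2)) := by
  have hpos := wpRoot_pos.trans (wpRoot_lt_wp hx)
  rw [← sqrt_sq (neg_pos.2 (wp'_neg hx)).le, neg_sq, wp'_sq ⟨hx.1, by linarith [hx.2]⟩, mul_assoc,
    ← sqrt_mul hpos.le, sqrt_mul zero_le_four, show (4 : ℝ) = 2 ^ 2 by norm_num,
    sqrt_sq zero_le_two]

/-! ### The lemniscatic period as a beta integral -/

/-- The substitution which turns `∫ 1 dx` over a real half-period into a beta integral. Since
`wp 0 = 0` by convention at the pole, `wpSubst 0 = 0` continues it. -/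
noncomputable def wpSubst (x : ℝ) : ℝ := (wpRoot / wp x) ^ 2

lemma wpSubst_zero : wpSubst 0 = 0 := by
  simp [wpSubst, wp]

lemma wpSubst_half : wpSubst (1 / 2) = 1 := by
  rw [wpSubst, wp_half, div_self wpRoot_pos.ne', one_pow]

lemma hasDerivAt_wpSubst {x : ℝ} (hx : x ∈ Ioo (0 : ℝ) 1) :
    HasDerivAt wpSubst (2 * wpRoot ^ 2 * -wp' x / wp x ^ 3) x := by
  have hpos := wpRoot_pos.trans_le (wpRoot_le_wp hx)
  refine (((hasDerivAt_wp hx).fun_inv hpos.ne').const_mul wpRoot |>.pow 2).congr_deriv ?_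
  simp only [Nat.cast_ofNat, Nat.add_one_sub_one, pow_one]
  field_simp

lemma continuousOn_wpSubst : ContinuousOn wpSubst (Icc 0 (1 / 2)) := by
  intro x hx
  rcases hx.1.eq_or_lt with rfl | hx0
  · have h : Tendsto wpSubst (𝓝[>] 0) (𝓝 (wpSubst 0)) := by
      simpa [wpSubst_zero] using! (tendsto_wp_zero.const_div_atTop wpRoot).pow 2
    exact (continuousWithinAt_Ioi_iff_Ici.1 h).mono Icc_subset_Ici_self
  · exact (hasDerivAt_wpSubst ⟨hx0, by linarith [hx.2]⟩).continuousAt.continuousWithinAt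

lemma deriv_wpSubst_mul_beta_integrand {x : ℝ} (hx : x ∈ Ioo (0 : ℝ) (1 / 2)) :
    2 * wpRoot ^ 2 * -wp' x / wp x ^ 3 *
      (wpSubst x ^ (1 / 4 - 1 : ℝ) * (1 - wpSubst x) ^ (1 / 2 - 1 : ℝ)) = 4 * √wpRoot := by
  have hroot := wpRoot_pos
  have hlt := wpRoot_lt_wp hx
  have hwp := hroot.trans hlt
  have hdiff : 0 < wp x ^ 2 - wpRoot ^ 2 := sub_pos.2 (pow_lt_pow_left₀ hlt hroot.le two_ne_zero)
  have hratio : 0 < wpRoot / wp x := div_pos hroot hwp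
  have hfst : wpSubst x ^ (1 / 4 - 1 : ℝ) = wp x * √(wp x) / (wpRoot * √wpRoot) := by
    rw [wpSubst, ← rpow_natCast_mul hratio.le, show ((2 : ℕ) : ℝ) * (1 / 4 - 1) = -(1 + 1 / 2) by
      norm_num, rpow_neg hratio.le, rpow_one_add' hratio.le (by norm_num), ← sqrt_eq_rpow,
      sqrt_div hroot.le]
    field_simp
  have hsnd : (1 - wpSubst x) ^ (1 / 2 - 1 : ℝ) = wp x / √(wp x ^ 2 - wpRoot ^ 2) := by
    have hone : 1 - wpSubst x = (wp x ^ 2 - wpRoot ^ 2) / wp x ^ 2 := by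
      rw [wpSubst]
      field_simp
    rw [hone, show (1 / 2 - 1 : ℝ) = -(1 / 2) by norm_num, rpow_neg (by positivity),
      ← sqrt_eq_rpow, sqrt_div hdiff.le, sqrt_sq hwp.le, inv_div]
  have := sqrt_pos.2 hdiff
  have := sqrt_pos.2 hwp
  have := sqrt_pos.2 hroot
  rw [hfst, hsnd, neg_wp'_eq hx]
  field_simp
  rw [sq_sqrt hwp.le, sq_sqrt hroot.le]
  ring

lemma integral_rpow_mul_one_sub_rpow {a b : ℝ} (ha : 0 < a) (hb : 0 < b) :
    ∫ u in (0 : ℝ)..1, u ^ (a - 1) * (1 - u) ^ (b - 1) = Gamma a * Gamma b / Gamma (a + b) := by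
  rw [← ProbabilityTheory.beta, ProbabilityTheory.beta_eq_betaIntegralReal a b ha hb,
    Complex.betaIntegral, ← Complex.ofReal_re (∫ u in (0 : ℝ)..1, _),
    ← intervalIntegral.integral_ofReal]
  congr 1
  refine intervalIntegral.integral_congr_Ioo_of_le zero_le_one fun u hu => ?_
  simp only [Complex.ofReal_mul, Complex.ofReal_cpow hu.1.le,
    Complex.ofReal_cpow (sub_pos.2 hu.2).le]
  push_cast
  rfl

lemma two_mul_sqrt_wpRoot_eq_beta :
    2 * √wpRoot = Gamma (1 / 4) * Gamma (1 / 2) / Gamma (1 / 4 + 1 / 2) := by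
  have hsubst := intervalIntegral.integral_deriv_smul_comp_of_deriv_nonneg (a := 0) (b := 1 / 2)
    (f := wpSubst) (f' := fun x => 2 * wpRoot ^ 2 * -wp' x / wp x ^ 3)
    (g := fun u => u ^ (1 / 4 - 1 : ℝ) * (1 - u) ^ (1 / 2 - 1 : ℝ)) (fun x hx => ?_)
    (fun x hx => ?_) fun x hx => ?_
  · rw [wpSubst_zero, wpSubst_half, integral_rpow_mul_one_sub_rpow (by norm_num) (by norm_num)]
      at hsubst
    simp only [Function.comp_apply, smul_eq_mul] at hsubst
    rw [intervalIntegral.integral_congr_Ioo_of_le (by norm_num)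
        fun x hx => deriv_wpSubst_mul_beta_integrand hx, intervalIntegral.integral_const,
      smul_eq_mul] at hsubst
    linarith
  · rw [uIcc_of_le (by norm_num)] at hx ⊢
    exact continuousOn_wpSubst x hx
  all_goals rw [min_eq_left (by norm_num), max_eq_right (by norm_num)] at hx
  · exact hasDerivAt_wpSubst ⟨hx.1, by linarith [hx.2]⟩
  · have hwp := wpRoot_pos.trans (wpRoot_lt_wp hx)
    have hwp' := neg_pos.2 (wp'_neg hx)
    positivity

lemma Gamma_quarter_mul_Gamma_three_quarters : Gamma (1 / 4) * Gamma (3 / 4) = √2 * π := by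
  have h := Gamma_mul_Gamma_one_sub (1 / 4)
  rw [show (1 - 1 / 4 : ℝ) = 3 / 4 by norm_num, show π * (1 / 4) = π / 4 by ring,
    sin_pi_div_four] at h
  rw [h]
  field_simp
  norm_num

theorem gaussian_G_four_re_eq : (gaussianPeriods.G 4).re = Gamma (1 / 4) ^ 8 / (960 * π ^ 2) := by
  have : 0 < Gamma (3 / 4) := Gamma_pos_of_pos (by norm_num)
  have hperiod : 2 * √wpRoot * (√2 * √π) = Gamma (1 / 4) ^ 2 := by
    have hmul := Gamma_quarter_mul_Gamma_three_quarters
    rw [two_mul_sqrt_wpRoot_eq_beta, Gamma_one_half_eq,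
      show (1 / 4 + 1 / 2 : ℝ) = 3 / 4 by norm_num]
    field_simp
    rw [sq_sqrt pi_pos.le]
    linear_combination -hmul
  have hfourth : (2 * √wpRoot * (√2 * √π)) ^ 4 = 960 * π ^ 2 * (gaussianPeriods.G 4).re := by
    calc (2 * √wpRoot * (√2 * √π)) ^ 4 = 16 * (√wpRoot ^ 2) ^ 2 * (√2 ^ 2) ^ 2 * (√π ^ 2) ^ 2 := by
          ring
      _ = 960 * π ^ 2 * (gaussianPeriods.G 4).re := by
          rw [sq_sqrt wpRoot_pos.le, sq_sqrt zero_le_two, sq_sqrt pi_pos.le, wpRoot_sq]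
          ring
  rw [eq_div_iff (by positivity), mul_comm, ← hfourth, hperiod, ← pow_mul]

end

theorem stmt_12 :
    (∫ k in (0:ℝ)..(1:ℝ), (EllK' k)^3)
        = 5 * ∫ k in (0:ℝ)..(1:ℝ), k * (EllK' k)^3 ∧
      (∫ k in (0:ℝ)..(1:ℝ), (EllK' k)^3)
        = Real.Gamma (1/4) ^ 8 / (128 * π^2) := by
  refine ⟨integral_EllK'_cube_eq_five_mul, ?_⟩
  have hmoment := two_thirds_mul_integral_mul_EllK_cube
  rw [gaussian_G_four_re_eq] at hmoment
  rw [integral_EllK'_cube_eq_five_mul, ← integral_mul_EllK_cube_eq_integral_mul_EllK'_cube]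
  linear_combination 15 / 2 * hmoment
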